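/- Let [0,1)^d + T be a cube tiling of ℝ^d. If r^+(T) > 2^{d−3}/3, then the tiling [0,1)^d + T contains a twin pair. -/

import Mathlib

/-- The half-open unit cube `[0,1)^d` translated by `t`. -/
def cube {d : ℕ} (t : Fin d → ℝ) : Set (Fin d → ℝ) :=
  {x | ∀ i, t i ≤ x i ∧ x i < t i + 1}

/-- `[0,1)^d + T` is a cube tiling of `ℝ^d`: the translated cubes are pairwise
disjoint and their union is all of `ℝ^d`. -/
def IsCubeTiling {d : ℕ} (T : Set (Fin d → ℝ)) : Prop :=
  (⋃ t ∈ T, cube t) = Set.univ ∧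
    T.Pairwise fun t s => Disjoint (cube t) (cube s)

/-- The cubes `[0,1)^d + t` and `[0,1)^d + s` form a twin pair. -/
def IsTwinPair {d : ℕ} (t s : Fin d → ℝ) : Prop :=
  ∃ j, |t j - s j| = 1 ∧ ∀ i, i ≠ j → t i = s i

/-- `L T x i` is the set of `i`-th coordinates `t i` of vectors `t ∈ T` such that
`([0,1)^d + t) ∩ ([0,1)^d + x) ≠ ∅` and `t i ≤ x i`. -/
def L {d : ℕ} (T : Set (Fin d → ℝ)) (x : Fin d → ℝ) (i : Fin d) : Set ℝ :=
  {r | ∃ t ∈ T, t i = r ∧ (cube t ∩ cube x).Nonempty ∧ t i ≤ x i}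

/-- `r⁺(T) = max_{x ∈ ℝ^d} max_{1 ≤ i ≤ d} |L(T,x,i)|`. -/
noncomputable def rplus {d : ℕ} (T : Set (Fin d → ℝ)) : ℕ :=
  ⨆ x : Fin d → ℝ, ⨆ i : Fin d, (L T x i).ncard

set_option linter.unusedSectionVars false

section Abstract
open Classical Finset
variable {ι R : Type} [Fintype ι]

def ev (q : R → Bool) (a : R × Bool) : ℤ := if q a.1 = a.2 then 1 else 0
def sg (b : Bool) : ℤ := if b then 1 else -1
def Dic (a b : R × Bool) : Prop := a.1 = b.1 ∧ a.2 ≠ b.2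

structure Good (V W : Finset (ι → R × Bool)) : Prop where
  dV : ∀ u ∈ V, ∀ v ∈ V, u ≠ v → ∃ i, Dic (u i) (v i)
  dW : ∀ u ∈ W, ∀ v ∈ W, u ≠ v → ∃ i, Dic (u i) (v i)
  tV : ∀ u ∈ V, ∀ v ∈ V, ∀ i, Dic (u i) (v i) → ∃ j, j ≠ i ∧ u j ≠ v j
  tW : ∀ u ∈ W, ∀ v ∈ W, ∀ i, Dic (u i) (v i) → ∃ j, j ≠ i ∧ u j ≠ v j
  disj : ∀ u ∈ V, u ∉ W
  eq : ∀ p : ι → R → Bool, ∑ u ∈ V, ∏ i, ev (p i) (u i) = ∑ u ∈ W, ∏ i, ev (p i) (u i)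

lemma Good.symm {V W : Finset (ι → R × Bool)} (h : Good V W) : Good W V :=
  ⟨h.dW, h.dV, h.tW, h.tV, fun u hu hv => h.disj u hv hu, fun p => (h.eq p).symm⟩

lemma Good.test {V W : Finset (ι → R × Bool)} (h : Good V W) (φ : ι → R × Bool → ℤ)
    (hφ : ∀ i, ∃ (c d : ℤ) (P Q : R → Bool), ∀ a, φ i a = c * ev P a + d * ev Q a) :
    ∑ u ∈ V, ∏ i, φ i (u i) = ∑ u ∈ W, ∏ i, φ i (u i) := by
  choose c d P Q hc using hφ
  have key : ∀ u : ι → R × Bool, ∏ i, φ i (u i) =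
      ∑ t ∈ (univ : Finset ι).powerset, ((∏ i ∈ t, c i) * ∏ i ∈ univ \ t, d i) *
        ∏ i, ev (if i ∈ t then P i else Q i) (u i) := by
    intro u
    simp_rw [hc]
    rw [Finset.prod_add]
    refine Finset.sum_congr rfl fun t _ => ?_
    rw [Finset.prod_mul_distrib, Finset.prod_mul_distrib]
    have : ∏ i, ev (if i ∈ t then P i else Q i) (u i) =
        (∏ i ∈ t, ev (P i) (u i)) * ∏ i ∈ univ \ t, ev (Q i) (u i) := by
      rw [← Finset.prod_sdiff (Finset.subset_univ t), mul_comm]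
      congr 1
      · exact Finset.prod_congr rfl fun i hi => by simp [hi]
      · exact Finset.prod_congr rfl fun i hi => by simp [(Finset.mem_sdiff.1 hi).2]
    rw [this]; ring
  simp_rw [key]
  rw [Finset.sum_comm, Finset.sum_comm (s := W)]
  refine Finset.sum_congr rfl fun t _ => ?_
  rw [← Finset.mul_sum, ← Finset.mul_sum, h.eq]

/-- product of signs over `S` -/
noncomputable def sgn (S : Finset ι) (u : ι → R × Bool) : ℤ := ∏ i ∈ S, sg (u i).2

lemma sg_cases (b : Bool) : sg b = 1 ∨ sg b = -1 := by cases b <;> simp [sg]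

lemma sgn_cases (S : Finset ι) (u : ι → R × Bool) : sgn S u = 1 ∨ sgn S u = -1 := by
  unfold sgn
  induction S using Finset.induction_on with
  | empty => simp
  | insert a s ha ih =>
    rw [Finset.prod_insert ha]
    rcases ih with h | h <;> rcases sg_cases (u a).2 with h' | h' <;> simp [h, h']

def Cond (S M : Finset ι) (p : ι → R → Bool) (β : ι → R) (u : ι → R × Bool) : Prop :=
  (∀ i ∈ S, (u i).1 = β i) ∧ ∀ i, i ∉ S → i ∉ M → p i (u i).1 = (u i).2

lemma Good.ident {V W : Finset (ι → R × Bool)} (h : Good V W) (S M : Finset ι)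
    (p : ι → R → Bool) (β : ι → R) :
    ∑ u ∈ V with Cond S M p β u, sgn S u = ∑ u ∈ W with Cond S M p β u, sgn S u := by
  have key : ∀ u : ι → R × Bool, (if Cond S M p β u then sgn S u else 0) =
      ∏ i, (if i ∈ S then (if (u i).1 = β i then sg (u i).2 else 0)
        else if i ∈ M then 1 else ev (p i) (u i)) := by
    intro u
    split_ifs with hc
    · have : ∀ i, (if i ∈ S then (if (u i).1 = β i then sg (u i).2 else 0)
        else if i ∈ M then 1 else ev (p i) (u i)) = if i ∈ S then sg (u i).2 else 1 := by
        intro i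
        by_cases hi : i ∈ S
        · simp [hi, hc.1 i hi]
        · by_cases hm : i ∈ M
          · simp [hi, hm]
          · simp [hi, hm, ev, hc.2 i hi hm]
      simp_rw [this]
      simp [sgn, Finset.prod_ite_mem]
    · symm
      have : ∃ i, (if i ∈ S then (if (u i).1 = β i then sg (u i).2 else 0)
        else if i ∈ M then 1 else ev (p i) (u i)) = 0 := by
        by_contra hne
        push Not at hne
        apply hc
        constructor
        · intro i hi
          have := hne i
          by_contra hb
          simp [hi, hb] at this
        · intro i hi hm
          have := hne i
          by_contra hb
          simp [hi, hm, ev, hb] at this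
      obtain ⟨i, hi⟩ := this
      exact Finset.prod_eq_zero (Finset.mem_univ i) hi
  rw [Finset.sum_filter, Finset.sum_filter]
  simp_rw [key]
  refine h.test (fun i a => (if i ∈ S then (if a.1 = β i then sg a.2 else 0)
        else if i ∈ M then 1 else ev (p i) a)) ?_
  intro i
  by_cases hi : i ∈ S
  · refine ⟨1, -1, fun _ => true, fun r => if r = β i then false else true, ?_⟩
    rintro ⟨r, b⟩
    by_cases hr : r = β i <;> cases b <;> simp [hi, hr, ev, sg]
  · by_cases hm : i ∈ M
    · refine ⟨1, 1, fun _ => true, fun _ => false, ?_⟩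
      rintro ⟨r, b⟩
      cases b <;> simp [hi, hm, ev]
    · exact ⟨1, 0, p i, p i, fun a => by simp [hi, hm]⟩

lemma Good.card_eq {V W : Finset (ι → R × Bool)} (h : Good V W) : V.card = W.card := by
  have := h.test (fun _ _ => 1) (fun i => ⟨1, 1, fun _ => true, fun _ => false, by
    rintro ⟨r, b⟩; cases b <;> simp [ev]⟩)
  simpa using this

/-- signed indicator -/
noncomputable def ff (V : Finset (ι → R × Bool)) (u : ι → R × Bool) : ℤ := if u ∈ V then 1 else -1

lemma ff_cases (V : Finset (ι → R × Bool)) (u : ι → R × Bool) : ff V u = 1 ∨ ff V u = -1 := by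
  unfold ff; split_ifs <;> simp

lemma Good.ident' {V W : Finset (ι → R × Bool)} (h : Good V W) (S M : Finset ι)
    (p : ι → R → Bool) (β : ι → R) :
    ∑ u ∈ V ∪ W with Cond S M p β u, ff V u * sgn S u = 0 := by
  have hd : Disjoint V W := Finset.disjoint_left.2 h.disj
  rw [Finset.sum_filter, Finset.sum_union hd, ← Finset.sum_filter, ← Finset.sum_filter]
  have h1 : ∑ u ∈ V with Cond S M p β u, ff V u * sgn S u =
      ∑ u ∈ V with Cond S M p β u, sgn S u :=
    Finset.sum_congr rfl fun u hu => by simp [ff, (Finset.mem_filter.1 hu).1]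
  have h2 : ∑ u ∈ W with Cond S M p β u, ff V u * sgn S u =
      - ∑ u ∈ W with Cond S M p β u, sgn S u := by
    rw [← Finset.sum_neg_distrib]
    refine Finset.sum_congr rfl fun u hu => ?_
    have : u ∉ V := fun hv => h.disj u hv (Finset.mem_filter.1 hu).1
    simp [ff, this]
  rw [h1, h2, h.ident]; ring

/-- flipping: if a pattern contains a word of `W` it contains a word of `V`. -/
lemma Good.exists_mem {V W : Finset (ι → R × Bool)} (h : Good V W) (p : ι → R → Bool)
    (w : ι → R × Bool) (hw : w ∈ W) (hp : ∀ i, p i (w i).1 = (w i).2) :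
    ∃ u ∈ V, ∀ i, p i (u i).1 = (u i).2 := by
  by_contra hne
  push Not at hne
  have h1 : ∑ u ∈ V, ∏ i, ev (p i) (u i) = 0 := by
    refine Finset.sum_eq_zero fun u hu => ?_
    obtain ⟨i, hi⟩ := hne u hu
    exact Finset.prod_eq_zero (Finset.mem_univ i) (by simp [ev, hi])
  have h2 : 1 ≤ ∑ u ∈ W, ∏ i, ev (p i) (u i) := by
    have : ∏ i, ev (p i) (w i) = 1 := Finset.prod_eq_one fun i _ => by simp [ev, hp i]
    have hn : ∀ u ∈ W, 0 ≤ ∏ i, ev (p i) (u i) := fun u _ =>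
      Finset.prod_nonneg fun i _ => by unfold ev; split_ifs <;> simp
    have := Finset.single_le_sum hn hw
    omega
  rw [h.eq] at h1
  omega

end Abstract

set_option linter.unusedSectionVars false

section Abstract2
open Classical Finset
variable {ι R : Type} [Fintype ι]

lemma Cond.iff (K : Finset ι) (p : ι → R → Bool) (β : ι → R) (u : ι → R × Bool) :
    Cond K ∅ p β u ↔ (∀ i ∈ K, (u i).1 = β i) ∧ ∀ i, i ∉ K → p i (u i).1 = (u i).2 := by
  simp [Cond]

lemma Cond.iff' {K M : Finset ι} (hM : M ⊆ K) (p : ι → R → Bool) (β : ι → R) (u : ι → R × Bool) :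
    Cond (K \ M) M p β u ↔
      (∀ i ∈ K, i ∉ M → (u i).1 = β i) ∧ ∀ i, i ∉ K → p i (u i).1 = (u i).2 := by
  unfold Cond
  constructor
  · rintro ⟨h1, h2⟩
    refine ⟨fun i hi hm => h1 i (by simp [hi, hm]), fun i hi => h2 i (by simp [hi]) (fun h => hi (hM h))⟩
  · rintro ⟨h1, h2⟩
    refine ⟨fun i hi => h1 i (by simp at hi; exact hi.1) (by simp at hi; exact hi.2), fun i hi hm => h2 i (by simp at hi; tauto)⟩

lemma abs_sum_le_card {α : Type*} (s : Finset α) (f : α → ℤ) (h : ∀ a ∈ s, |f a| ≤ 1) :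
    |∑ a ∈ s, f a| ≤ s.card := by
  refine (Finset.abs_sum_le_sum_abs _ _).trans ?_
  have := Finset.sum_le_sum h
  simpa using this

lemma Good.line {V W : Finset (ι → R × Bool)} (h : Good V W) {K M : Finset ι} (hM : M ⊆ K)
    (p : ι → R → Bool) (β : ι → R) :
    |∑ u ∈ V ∪ W with Cond K ∅ p β u, ff V u * sgn (K \ M) u| ≤
      (({u ∈ V ∪ W | Cond (K \ M) M p β u ∧ ¬ Cond K ∅ p β u} : Finset _).card : ℤ) := by
  have h0 := h.ident' (K \ M) M p β
  have hs : ({u ∈ V ∪ W | Cond (K \ M) M p β u} : Finset _) =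
      ({u ∈ V ∪ W | Cond K ∅ p β u} : Finset _) ∪
      ({u ∈ V ∪ W | Cond (K \ M) M p β u ∧ ¬ Cond K ∅ p β u} : Finset _) := by
    ext u
    simp only [Finset.mem_filter, Finset.mem_union]
    have : Cond K ∅ p β u → Cond (K \ M) M p β u := by
      rw [Cond.iff, Cond.iff' hM]; exact fun h => ⟨fun i hi _ => h.1 i hi, h.2⟩
    tauto
  have hd : Disjoint ({u ∈ V ∪ W | Cond K ∅ p β u} : Finset _)
      ({u ∈ V ∪ W | Cond (K \ M) M p β u ∧ ¬ Cond K ∅ p β u} : Finset _) := by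
    rw [Finset.disjoint_left]; intro u; simp only [Finset.mem_filter]; tauto
  rw [hs, Finset.sum_union hd] at h0
  rw [eq_neg_of_add_eq_zero_left h0, abs_neg]
  apply abs_sum_le_card
  intro a _
  rcases ff_cases V a with h1 | h1 <;> rcases sgn_cases (K \ M) a with h2 | h2 <;> simp [h1, h2]

structure Side (V W : Finset (ι → R × Bool)) (K : Finset ι) (p : ι → R → Bool)
    (v w : ι → R × Bool) : Prop where
  good : Good V W
  hv : v ∈ V
  hw : w ∈ W
  hK : ∀ i ∈ K, (v i).1 ≠ (w i).1
  hKc : ∀ i, i ∉ K → v i = w i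
  hpv : ∀ i, p i (v i).1 = (v i).2
  hpw : ∀ i, p i (w i).1 = (w i).2
  max : ∀ x ∈ V, ∀ y ∈ W, (∀ i, ¬ Dic (x i) (y i)) →
    ({i | x i ≠ y i} : Finset ι).card ≤ K.card

lemma Dic.symm {a b : R × Bool} (h : Dic a b) : Dic b a := ⟨h.1.symm, h.2.symm⟩

variable {V W : Finset (ι → R × Bool)} {K : Finset ι} {p : ι → R → Bool} {v w : ι → R × Bool}

lemma Side.symm (s : Side V W K p v w) : Side W V K p w v where
  good := s.good.symm
  hv := s.hw
  hw := s.hv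
  hK := fun i hi => (s.hK i hi).symm
  hKc := fun i hi => (s.hKc i hi).symm
  hpv := s.hpw
  hpw := s.hpv
  max := fun x hx y hy h => by
    have := s.max y hy x hx (fun i hd => h i hd.symm)
    simpa only [ne_comm] using this

lemma not_dic_of_pat {q : R → Bool} {a b : R × Bool} (ha : q a.1 = a.2) (hb : q b.1 = b.2) :
    ¬ Dic a b := by
  rintro ⟨h1, h2⟩; apply h2; rw [← ha, ← hb, h1]

lemma Side.offK (s : Side V W K p v w) {x : ι → R × Bool} (hx : x ∈ V)
    (hl : ∀ i, i ∉ K → p i (x i).1 = (x i).2) (hb : ∀ i ∈ K, (x i).1 ≠ (w i).1) :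
    ∀ i, i ∉ K → x i = v i := by
  have h1 := s.max x hx w s.hw (fun i => by
    by_cases hi : i ∈ K
    · exact fun h => hb i hi h.1
    · exact not_dic_of_pat (hl i hi) (s.hpw i))
  have h2 : K ⊆ ({i | x i ≠ w i} : Finset ι) := fun i hi => by
    simp only [Finset.mem_filter, Finset.mem_univ, true_and]
    exact fun h => hb i hi (by rw [h])
  have h3 := Finset.eq_of_subset_of_card_le h2 h1
  intro i hi
  rw [h3] at hi
  have hi' := hi
  simp only [Finset.mem_filter, Finset.mem_univ, true_and, not_not] at hi
  rw [hi, s.hKc i (by rw [h3]; exact hi')]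

lemma Side.eq_w (s : Side V W K p v w) {x : ι → R × Bool} (hx : x ∈ W)
    (hl : ∀ i, i ∉ K → p i (x i).1 = (x i).2) (hb : ∀ i ∈ K, ¬ Dic (x i) (w i)) : x = w := by
  by_contra hne
  obtain ⟨i, hi⟩ := s.good.dW x hx w s.hw hne
  by_cases hk : i ∈ K
  · exact hb i hk hi
  · exact not_dic_of_pat (hl i hk) (s.hpw i) hi

lemma Side.vne (s : Side V W K p v w) : v ≠ w := fun h => s.good.disj v s.hv (h ▸ s.hw)

lemma Side.Kne (s : Side V W K p v w) : K.Nonempty := by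
  by_contra h
  rw [Finset.not_nonempty_iff_eq_empty] at h
  exact s.vne (funext fun i => s.hKc i (by simp [h]))

lemma Side.notW (s : Side V W K p v w) {x : ι → R × Bool} (hx : x ∈ W)
    (hl : ∀ i, i ∉ K → p i (x i).1 = (x i).2) : ¬ ∀ i ∈ K, (x i).1 = (v i).1 := by
  intro hb
  have h := s.eq_w hx hl (fun i hi h => s.hK i hi (by rw [← hb i hi, h.1]))
  obtain ⟨i, hi⟩ := s.Kne
  exact s.hK i hi (by rw [← hb i hi, h])

noncomputable def XX (V : Finset (ι → R × Bool)) (K : Finset ι) (p : ι → R → Bool)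
    (v : ι → R × Bool) : Finset (ι → R × Bool) :=
  {u ∈ V | Cond K ∅ p (fun i => (v i).1) u}

lemma Side.XX_eq (s : Side V W K p v w) :
    ({u ∈ V ∪ W | Cond K ∅ p (fun i => (v i).1) u} : Finset _) = XX V K p v := by
  ext u
  simp only [XX, Finset.mem_filter, Finset.mem_union]
  constructor
  · rintro ⟨h1 | h1, h2⟩
    · exact ⟨h1, h2⟩
    · rw [Cond.iff] at h2
      exact absurd h2.1 (s.notW h1 h2.2)
  · rintro ⟨h1, h2⟩; exact ⟨Or.inl h1, h2⟩

lemma Side.v_mem (s : Side V W K p v w) : v ∈ XX V K p v := by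
  simp only [XX, Finset.mem_filter, Cond.iff]
  exact ⟨s.hv, fun _ _ => trivial, fun i _ => s.hpv i⟩

lemma Side.X_base (s : Side V W K p v w) {x : ι → R × Bool} (hx : x ∈ XX V K p v) :
    ∀ i, (x i).1 = (v i).1 := by
  simp only [XX, Finset.mem_filter, Cond.iff] at hx
  intro i
  by_cases hi : i ∈ K
  · exact hx.2.1 i hi
  · rw [s.offK hx.1 hx.2.2 (fun i hi => by rw [hx.2.1 i hi]; exact s.hK i hi) i hi]

lemma Side.X_off (s : Side V W K p v w) {x : ι → R × Bool} (hx : x ∈ XX V K p v) :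
    ∀ i, i ∉ K → x i = v i := by
  simp only [XX, Finset.mem_filter, Cond.iff] at hx
  exact s.offK hx.1 hx.2.2 (fun i hi => by rw [hx.2.1 i hi]; exact s.hK i hi)

lemma XX_sub : XX V K p v ⊆ V := Finset.filter_subset _ _

noncomputable def df (K : Finset ι) (v u : ι → R × Bool) : Finset ι := {i ∈ K | (u i).1 ≠ (v i).1}

lemma mem_df {u : ι → R × Bool} {i : ι} : i ∈ df K v u ↔ i ∈ K ∧ (u i).1 ≠ (v i).1 := by simp [df]

/-- words with nonempty difference set inside `M` -/
noncomputable def GG (V W : Finset (ι → R × Bool)) (K : Finset ι) (v : ι → R × Bool) (M : Finset ι) :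
    Finset (ι → R × Bool) := {u ∈ V ∪ W | df K v u ⊆ M ∧ df K v u ≠ ∅}

lemma ff_XX {x : ι → R × Bool} (hx : x ∈ XX V K p v) : ff V x = 1 := by
  simp [ff, XX_sub hx]

lemma Side.X_line (s : Side V W K p v w) {M : Finset ι} (hM : M ⊆ K) :
    |∑ x ∈ XX V K p v, sgn (K \ M) x| ≤ ((GG V W K v M).card : ℤ) := by
  have h := s.good.line hM p (fun i => (v i).1)
  rw [s.XX_eq] at h
  have h1 : ∑ x ∈ XX V K p v, ff V x * sgn (K \ M) x = ∑ x ∈ XX V K p v, sgn (K \ M) x :=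
    Finset.sum_congr rfl fun x hx => by rw [ff_XX hx, one_mul]
  rw [h1] at h
  refine h.trans ?_
  norm_cast
  apply Finset.card_le_card
  intro u hu
  simp only [Finset.mem_filter, Cond.iff, Cond.iff' hM, GG] at hu ⊢
  refine ⟨hu.1, ?_, ?_⟩
  · intro i hi
    rw [mem_df] at hi
    by_contra hm
    exact hi.2 (hu.2.1.1 i hi.1 hm)
  · intro h0
    apply hu.2.2
    refine ⟨fun i hi => ?_, hu.2.1.2⟩
    by_contra hb
    have : i ∈ df K v u := mem_df.2 ⟨hi, hb⟩
    simp [h0] at this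

lemma Side.X_sum (s : Side V W K p v w) : ∑ x ∈ XX V K p v, sgn K x = 0 := by
  have h := s.X_line (M := ∅) (by simp)
  have h1 : GG V W K v ∅ = ∅ := by
    ext u; simp [GG]
  rw [h1] at h
  simpa using h

lemma sgn_sdiff {M : Finset ι} (hM : M ⊆ K) (x : ι → R × Bool) :
    sgn (K \ M) x = sgn K x * sgn M x := by
  unfold sgn
  rw [← Finset.prod_sdiff hM, mul_assoc]
  rcases sgn_cases M x with h | h <;> unfold sgn at h <;> simp [h]

/-- sign difference set -/
noncomputable def sd (K : Finset ι) (x y : ι → R × Bool) : Finset ι := {i ∈ K | (x i).2 ≠ (y i).2}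

lemma sg_mul (a b : Bool) : sg a * sg b = if a ≠ b then -1 else 1 := by
  cases a <;> cases b <;> simp [sg]

lemma sgn_mul (x y : ι → R × Bool) : sgn K x * sgn K y = (-1) ^ (sd K x y).card := by
  unfold sgn sd
  rw [← Finset.prod_mul_distrib]
  simp_rw [sg_mul]
  rw [Finset.prod_ite]
  simp

lemma Side.sd_ge (s : Side V W K p v w) {x y : ι → R × Bool} (hx : x ∈ XX V K p v)
    (hy : y ∈ XX V K p v) (h : sgn K x ≠ sgn K y) :
    Odd (sd K x y).card ∧ 3 ≤ (sd K x y).card := by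
  have h1 : Odd (sd K x y).card := by
    by_contra hn
    rw [Nat.not_odd_iff_even] at hn
    have := sgn_mul (K := K) x y
    rw [hn.neg_one_pow] at this
    rcases sgn_cases K x with a | a <;> rcases sgn_cases K y with b | b <;> rw [a, b] at this h <;> simp at this h
  refine ⟨h1, ?_⟩
  by_contra hlt
  have h2 : (sd K x y).card = 1 := by
    obtain ⟨k, hk⟩ := h1; omega
  obtain ⟨i, hi⟩ := Finset.card_eq_one.1 h2
  have him : i ∈ sd K x y := by rw [hi]; simp
  simp only [sd, Finset.mem_filter] at him
  obtain ⟨j, hj, hne⟩ := s.good.tV x (XX_sub hx) y (XX_sub hy) i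
    ⟨by rw [s.X_base hx, s.X_base hy], him.2⟩
  apply hne
  by_cases hjK : j ∈ K
  · have : j ∉ sd K x y := by rw [hi]; simpa using hj
    simp only [sd, Finset.mem_filter, not_and, not_not] at this
    exact Prod.ext (by rw [s.X_base hx, s.X_base hy]) (this hjK)
  · rw [s.X_off hx j hjK, s.X_off hy j hjK]

noncomputable def Xp (V : Finset (ι → R × Bool)) (K : Finset ι) (p : ι → R → Bool)
    (v : ι → R × Bool) : Finset (ι → R × Bool) := {u ∈ XX V K p v | sgn K u = 1}
noncomputable def Xm (V : Finset (ι → R × Bool)) (K : Finset ι) (p : ι → R → Bool)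
    (v : ι → R × Bool) : Finset (ι → R × Bool) := {u ∈ XX V K p v | ¬ sgn K u = 1}

lemma XX_sum_split (g : (ι → R × Bool) → ℤ) : ∑ x ∈ XX V K p v, g x =
    ∑ x ∈ Xp V K p v, g x + ∑ x ∈ Xm V K p v, g x := by
  rw [Xp, Xm, Finset.sum_filter_add_sum_filter_not]

lemma Xm_sgn {x : ι → R × Bool} (hx : x ∈ Xm V K p v) : sgn K x = -1 := by
  rcases sgn_cases K x with h | h
  · simp [Xm, h] at hx
  · exact h

lemma Xp_sgn {x : ι → R × Bool} (hx : x ∈ Xp V K p v) : sgn K x = 1 :=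
  (Finset.mem_filter.1 hx).2

lemma Side.Xpm (s : Side V W K p v w) : (Xp V K p v).card = (Xm V K p v).card := by
  have h := s.X_sum
  rw [XX_sum_split, Finset.sum_congr rfl (fun x hx => Xp_sgn hx),
    Finset.sum_congr rfl (fun x hx => Xm_sgn hx)] at h
  simp at h
  omega

lemma XX_card : (XX V K p v).card = (Xp V K p v).card + (Xm V K p v).card := by
  have := XX_sum_split (V := V) (K := K) (p := p) (v := v) (fun _ => 1)
  simp at this
  exact_mod_cast this

lemma Side.Xp_pos (s : Side V W K p v w) : 1 ≤ (Xp V K p v).card := by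
  have h1 := s.Xpm
  have h2 := XX_card (V := V) (K := K) (p := p) (v := v)
  have := Finset.card_pos.2 ⟨v, s.v_mem⟩
  omega

lemma Side.X_line' (s : Side V W K p v w) {M : Finset ι} (hM : M ⊆ K) :
    |∑ x ∈ Xp V K p v, sgn M x - ∑ x ∈ Xm V K p v, sgn M x| ≤ ((GG V W K v M).card : ℤ) := by
  have h := s.X_line hM
  rw [XX_sum_split] at h
  have h1 : ∑ x ∈ Xp V K p v, sgn (K \ M) x = ∑ x ∈ Xp V K p v, sgn M x :=
    Finset.sum_congr rfl fun x hx => by rw [sgn_sdiff hM, Xp_sgn hx, one_mul]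
  have h2 : ∑ x ∈ Xm V K p v, sgn (K \ M) x = -∑ x ∈ Xm V K p v, sgn M x := by
    rw [← Finset.sum_neg_distrib]
    exact Finset.sum_congr rfl fun x hx => by rw [sgn_sdiff hM, Xm_sgn hx, neg_one_mul]
  rw [h1, h2, ← sub_eq_add_neg] at h
  exact h

/-- the flip argument -/
lemma Side.flip (s : Side V W K p v w) {j : ι} (hj : j ∈ K) :
    ∃ u ∈ V, (u j).1 = (v j).1 ∧ (u j).2 ≠ (v j).2 ∧ ∀ i, i ≠ j → p i (u i).1 = (u i).2 := by
  obtain ⟨u, hu, hp⟩ := s.good.exists_mem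
    (fun i r => if i = j ∧ r = (v i).1 then !(v i).2 else p i r) w s.hw (fun i => by
      by_cases hi : i = j
      · subst hi; simp [(s.hK i hj).symm, s.hpw]
      · simp [hi, s.hpw])
  have h1 : ∀ i, i ≠ j → p i (u i).1 = (u i).2 := fun i hi => by
    have := hp i; simpa [hi] using this
  have hne : u ≠ v := by
    rintro rfl
    have := hp j
    simp at this
  obtain ⟨i, hi⟩ := s.good.dV u hu v s.hv hne
  have hij : i = j := by
    by_contra hij
    exact not_dic_of_pat (h1 i hij) (s.hpv i) hi
  subst hij
  exact ⟨u, hu, hi.1, hi.2, h1⟩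

lemma Side.V_ge (s : Side V W K p v w) : (XX V K p v).card + K.card ≤ V.card := by
  have h : ∀ j : K, ∃ u ∈ V, (u j).1 = (v j).1 ∧ (u j).2 ≠ (v j).2 ∧
    ∀ i, i ≠ (j : ι) → p i (u i).1 = (u i).2 := fun j => s.flip j.2
  choose g hg h1 h2 h3 using h
  have hinj : Function.Injective g := by
    intro j k hjk
    by_contra hne
    have a := h3 k j (fun h => hne (Subtype.ext h))
    rw [← hjk, h1 j, s.hpv] at a
    exact h2 j a.symm
  have hd : Disjoint (XX V K p v) (Finset.univ.image g) := by
    rw [Finset.disjoint_right]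
    intro u hu hx
    obtain ⟨j, -, rfl⟩ := Finset.mem_image.1 hu
    obtain ⟨k, hk, hne⟩ := s.good.tV _ (hg j) v s.hv j ⟨h1 j, h2 j⟩
    apply hne
    refine Prod.ext (s.X_base hx k) ?_
    rw [← h3 j k hk, s.X_base hx k, s.hpv]
  have h4 : (XX V K p v) ∪ (Finset.univ.image g) ⊆ V := by
    apply Finset.union_subset XX_sub
    intro u hu
    obtain ⟨j, -, rfl⟩ := Finset.mem_image.1 hu
    exact hg j
  have h5 := Finset.card_le_card h4
  rw [Finset.card_union_of_disjoint hd, Finset.card_image_of_injective _ hinj] at h5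
  simpa using h5

end Abstract2

set_option linter.unusedSectionVars false

section Abstract3
open Classical Finset
variable {ι R : Type} [Fintype ι]
variable {V W : Finset (ι → R × Bool)} {K : Finset ι} {p : ι → R → Bool} {v w : ι → R × Bool}

noncomputable def ball (V W : Finset (ι → R × Bool)) (K : Finset ι) (v : ι → R × Bool) (r : ℕ) :
    Finset (ι → R × Bool) := {u ∈ V ∪ W | (df K v u).card ≤ r}

lemma Side.df_X (s : Side V W K p v w) {x : ι → R × Bool} (hx : x ∈ XX V K p v) : df K v x = ∅ := by
  ext i
  simp [mem_df, s.X_base hx i]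

lemma Side.ball_ge (s : Side V W K p v w) (F : Finset (Finset ι)) (r : ℕ)
    (hF : ∀ M ∈ F, M.card ≤ r)
    (hd : ∀ M ∈ F, ∀ N ∈ F, M ≠ N → Disjoint M N) :
    (XX V K p v).card + ∑ M ∈ F, (GG V W K v M).card ≤ (ball V W K v r).card := by
  have h1 : ∀ M ∈ F, ∀ N ∈ F, M ≠ N → Disjoint (GG V W K v M) (GG V W K v N) := by
    intro M hM N hN hne
    rw [Finset.disjoint_left]
    intro u hu hu'
    simp only [GG, Finset.mem_filter] at hu hu'
    obtain ⟨i, hi⟩ := Finset.nonempty_iff_ne_empty.2 hu.2.2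
    exact Finset.disjoint_left.1 (hd M hM N hN hne) (hu.2.1 hi) (hu'.2.1 hi)
  rw [← Finset.card_biUnion h1, ← Finset.card_union_of_disjoint]
  · apply Finset.card_le_card
    intro u hu
    simp only [Finset.mem_union, Finset.mem_biUnion] at hu
    simp only [ball, Finset.mem_filter]
    rcases hu with hu | ⟨M, hM, hu⟩
    · exact ⟨Finset.mem_union_left _ (XX_sub hu), by simp [s.df_X hu]⟩
    · simp only [GG, Finset.mem_filter] at hu
      exact ⟨hu.1, (Finset.card_le_card hu.2.1).trans (hF M hM)⟩
  · rw [Finset.disjoint_left]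
    intro u hu hu'
    simp only [Finset.mem_biUnion, GG, Finset.mem_filter] at hu'
    obtain ⟨M, _, hu'⟩ := hu'
    exact hu'.2.2 (s.df_X hu)

lemma Side.ball1_ge (s : Side V W K p v w) (D : Finset ι) :
    (XX V K p v).card + ∑ i ∈ D, (GG V W K v {i}).card ≤ (ball V W K v 1).card := by
  have := s.ball_ge (D.image fun i => {i}) 1 (by simp) (by
    intro M hM N hN hne
    simp only [Finset.mem_image] at hM hN
    obtain ⟨a, _, rfl⟩ := hM
    obtain ⟨b, _, rfl⟩ := hN
    simp only [Finset.disjoint_singleton]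
    rintro rfl; exact hne rfl)
  rwa [Finset.sum_image (by intro a _ b _ h; simpa using h)] at this

lemma sum_sg_mul (x y : ι → R × Bool) :
    ∑ i ∈ K, sg (x i).2 * sg (y i).2 = (K.card : ℤ) - 2 * (sd K x y).card := by
  have : ∀ i, sg (x i).2 * sg (y i).2 = 1 - 2 * (if (x i).2 ≠ (y i).2 then 1 else 0) := by
    intro i; rw [sg_mul]; split_ifs <;> simp
  simp_rw [this]
  rw [Finset.sum_sub_distrib, ← Finset.mul_sum, sd, Finset.sum_boole]
  simp

lemma sum_ind (x y : ι → R × Bool) :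
    ∑ i ∈ K, (if (x i).2 ≠ (y i).2 then (1 : ℤ) else 0) = (sd K x y).card := by
  rw [sd, Finset.sum_boole]

lemma Xpm_ne {x y : ι → R × Bool} (hx : x ∈ Xp V K p v) (hy : y ∈ Xm V K p v) :
    sgn K x ≠ sgn K y := by rw [Xp_sgn hx, Xm_sgn hy]; decide

lemma Xp_sub : Xp V K p v ⊆ XX V K p v := Finset.filter_subset _ _
lemma Xm_sub : Xm V K p v ⊆ XX V K p v := Finset.filter_subset _ _

lemma Side.pm_sd (s : Side V W K p v w) {x y : ι → R × Bool} (hx : x ∈ Xp V K p v)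
    (hy : y ∈ Xm V K p v) : 3 ≤ (sd K x y).card :=
  (s.sd_ge (Xp_sub hx) (Xm_sub hy) (Xpm_ne hx hy)).2

lemma sgn_single (i : ι) (x : ι → R × Bool) : sgn {i} x = sg (x i).2 := by simp [sgn]

lemma num3 : ∀ a b c d e f : Bool, 3 - 3 * ((sg a + sg b + sg c) * (sg d + sg e + sg f)) ≤
    5 * |(sg a + (sg b + sg c)) - (sg d + (sg e + sg f))| := by decide

lemma Side.h3 (s : Side V W K p v w) (h : (Xp V K p v).card = 3) (hk : K.card ≤ 5) :
    12 ≤ (ball V W K v 1).card := by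
  have h' := s.Xpm
  have hX := XX_card (V := V) (K := K) (p := p) (v := v)
  obtain ⟨a, b, c, hab, hac, hbc, h1⟩ := Finset.card_eq_three.1 h
  obtain ⟨d, e, f, hde, hdf, hef, h2⟩ := Finset.card_eq_three.1 (h'.symm.trans h)
  have ma : a ∈ Xp V K p v := by simp [h1]
  have mb : b ∈ Xp V K p v := by simp [h1]
  have mc : c ∈ Xp V K p v := by simp [h1]
  have md : d ∈ Xm V K p v := by simp [h2]
  have me : e ∈ Xm V K p v := by simp [h2]
  have mf : f ∈ Xm V K p v := by simp [h2]
  have key : ∀ i ∈ K, 3 - 3 * ((sg (a i).2 + sg (b i).2 + sg (c i).2) *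
      (sg (d i).2 + sg (e i).2 + sg (f i).2)) ≤ 5 * ((GG V W K v {i}).card : ℤ) := by
    intro i hi
    have hl := s.X_line' (M := {i}) (by simpa using hi)
    simp_rw [sgn_single] at hl
    rw [h1, h2, Finset.sum_insert (by simp [hab, hac]), Finset.sum_pair hbc,
      Finset.sum_insert (by simp [hde, hdf]), Finset.sum_pair hef] at hl
    have := num3 (a i).2 (b i).2 (c i).2 (d i).2 (e i).2 (f i).2
    omega
  have hs := Finset.sum_le_sum key
  have hb := s.ball1_ge K
  have e1 : ∑ i ∈ K, (3 - 3 * ((sg (a i).2 + sg (b i).2 + sg (c i).2) *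
      (sg (d i).2 + sg (e i).2 + sg (f i).2))) = 3 * (K.card : ℤ) - 3 * (
      ∑ i ∈ K, sg (a i).2 * sg (d i).2 + ∑ i ∈ K, sg (a i).2 * sg (e i).2 + ∑ i ∈ K, sg (a i).2 * sg (f i).2 +
      ∑ i ∈ K, sg (b i).2 * sg (d i).2 + ∑ i ∈ K, sg (b i).2 * sg (e i).2 + ∑ i ∈ K, sg (b i).2 * sg (f i).2 +
      ∑ i ∈ K, sg (c i).2 * sg (d i).2 + ∑ i ∈ K, sg (c i).2 * sg (e i).2 + ∑ i ∈ K, sg (c i).2 * sg (f i).2) := by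
    simp only [← Finset.sum_add_distrib, Finset.mul_sum]
    rw [Finset.card_eq_sum_ones]
    push_cast
    rw [Finset.mul_sum, ← Finset.sum_sub_distrib]
    exact Finset.sum_congr rfl fun i _ => by ring
  rw [e1, ← Finset.mul_sum] at hs
  simp only [sum_sg_mul] at hs
  have t1 := s.pm_sd ma md
  have t2 := s.pm_sd ma me
  have t3 := s.pm_sd ma mf
  have t4 := s.pm_sd mb md
  have t5 := s.pm_sd mb me
  have t6 := s.pm_sd mb mf
  have t7 := s.pm_sd mc md
  have t8 := s.pm_sd mc me
  have t9 := s.pm_sd mc mf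
  have hb' : ((XX V K p v).card : ℤ) + ∑ i ∈ K, ((GG V W K v {i}).card : ℤ) ≤ (ball V W K v 1).card := by
    exact_mod_cast hb
  omega

lemma num2 : ∀ a b c d : Bool, 2 * (if a ≠ c then (1 : ℤ) else 0) + 2 * (if b ≠ d then (1 : ℤ) else 0)
   - 4 * (if a ≠ b ∧ c ≠ d ∧ a = d then (1 : ℤ) else 0) ≤ |(sg a + sg b) - (sg c + sg d)| := by decide

lemma num2' : ∀ a b c d a' b' c' d' : Bool, (a ≠ b ∧ c ≠ d ∧ a = c) → (a' ≠ b' ∧ c' ≠ d' ∧ a' = d') →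
   |(sg a * sg a' + sg b * sg b') - (sg c * sg c' + sg d * sg d')| = 4 := by decide

lemma Side.h2 (s : Side V W K p v w) (h : (Xp V K p v).card = 2) :
    12 ≤ (ball V W K v 1).card ∨ (12 ≤ (ball V W K v 2).card ∧ 5 ≤ K.card) := by
  have h' := s.Xpm
  have hX := XX_card (V := V) (K := K) (p := p) (v := v)
  obtain ⟨a, b, hab, h1⟩ := Finset.card_eq_two.1 h
  obtain ⟨c, d, hcd, h2⟩ := Finset.card_eq_two.1 (h'.symm.trans h)
  have main : ∀ a b c d : ι → R × Bool, a ≠ b → c ≠ d → Xp V K p v = {a, b} → Xm V K p v = {c, d} →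
      12 ≤ (ball V W K v 1).card ∨
      2 ≤ ({i ∈ K | (a i).2 ≠ (b i).2 ∧ (c i).2 ≠ (d i).2 ∧ (a i).2 = (d i).2} : Finset ι).card := by
    intro a b c d hab hcd h1 h2
    by_contra hcon
    push Not at hcon
    have ma : a ∈ Xp V K p v := by simp [h1]
    have mb : b ∈ Xp V K p v := by simp [h1]
    have mc : c ∈ Xm V K p v := by simp [h2]
    have md : d ∈ Xm V K p v := by simp [h2]
    have key : ∀ i ∈ K, 2 * (if (a i).2 ≠ (c i).2 then (1 : ℤ) else 0) +
        2 * (if (b i).2 ≠ (d i).2 then (1 : ℤ) else 0)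
        - 4 * (if (a i).2 ≠ (b i).2 ∧ (c i).2 ≠ (d i).2 ∧ (a i).2 = (d i).2 then (1 : ℤ) else 0)
        ≤ ((GG V W K v {i}).card : ℤ) := by
      intro i hi
      have hl := s.X_line' (M := {i}) (by simpa using hi)
      simp_rw [sgn_single] at hl
      rw [h1, h2, Finset.sum_pair hab, Finset.sum_pair hcd] at hl
      exact (num2 _ _ _ _).trans hl
    have hs := Finset.sum_le_sum key
    rw [Finset.sum_sub_distrib, Finset.sum_add_distrib, ← Finset.mul_sum, ← Finset.mul_sum,
      ← Finset.mul_sum, sum_ind, sum_ind, Finset.sum_boole] at hs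
    have t1 := s.pm_sd ma mc
    have t2 := s.pm_sd mb md
    have hb := s.ball1_ge K
    have hb' : ((XX V K p v).card : ℤ) + ∑ i ∈ K, ((GG V W K v {i}).card : ℤ) ≤ (ball V W K v 1).card := by
      exact_mod_cast hb
    have hc2 := hcon.2
    omega
  rcases main a b c d hab hcd h1 h2 with hm | hm2
  · exact Or.inl hm
  rcases main a b d c hab hcd.symm h1 (by rw [h2, Finset.pair_comm]) with hm | hm1
  · exact Or.inl hm
  right
  have ma : a ∈ Xp V K p v := by simp [h1]
  have mc : c ∈ Xm V K p v := by simp [h2]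
  constructor
  · obtain ⟨a1, ha1, a2, ha2, ha⟩ := Finset.one_lt_card.1 hm1
    obtain ⟨b1, hb1, b2, hb2, hb⟩ := Finset.one_lt_card.1 hm2
    simp only [Finset.mem_filter] at ha1 ha2 hb1 hb2
    have hne : ∀ x y, (x ∈ K ∧ (a x).2 ≠ (b x).2 ∧ (d x).2 ≠ (c x).2 ∧ (a x).2 = (c x).2) →
      (y ∈ K ∧ (a y).2 ≠ (b y).2 ∧ (c y).2 ≠ (d y).2 ∧ (a y).2 = (d y).2) → x ≠ y := by
      rintro x y ⟨_, _, h3, h4⟩ ⟨_, _, _, h5⟩ rfl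
      exact h3 (h5.symm.trans h4)
    have hG : ∀ x y, (x ∈ K ∧ (a x).2 ≠ (b x).2 ∧ (d x).2 ≠ (c x).2 ∧ (a x).2 = (c x).2) →
      (y ∈ K ∧ (a y).2 ≠ (b y).2 ∧ (c y).2 ≠ (d y).2 ∧ (a y).2 = (d y).2) →
      4 ≤ (GG V W K v {x, y}).card := by
      intro x y hx hy
      have hl := s.X_line' (M := {x, y}) (by
        intro i hi; simp at hi; rcases hi with rfl | rfl; exacts [hx.1, hy.1])
      rw [h1, h2, Finset.sum_pair hab, Finset.sum_pair hcd] at hl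
      simp only [sgn, Finset.prod_pair (hne x y hx hy)] at hl
      rw [num2' _ _ _ _ _ _ _ _ ⟨hx.2.1, hx.2.2.1.symm, hx.2.2.2⟩ hy.2] at hl
      exact_mod_cast hl
    have hdis : Disjoint ({a1, b1} : Finset ι) {a2, b2} := by
      rw [Finset.disjoint_left]
      intro i hi hi'
      simp only [Finset.mem_insert, Finset.mem_singleton] at hi hi'
      rcases hi with rfl | rfl <;> rcases hi' with h | h
      · exact ha h
      · exact hne _ _ ha1 hb2 h
      · exact hne _ _ ha2 hb1 h.symm
      · exact hb h
    have hneq : ({a1, b1} : Finset ι) ≠ {a2, b2} := by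
      intro h
      rw [← h, Finset.disjoint_self_iff_empty] at hdis
      simp at hdis
    have := s.ball_ge {{a1, b1}, {a2, b2}} 2 (by
      intro M hM
      simp only [Finset.mem_insert, Finset.mem_singleton] at hM
      rcases hM with rfl | rfl <;> exact Finset.card_le_two) (by
      intro M hM N hN hMN
      simp only [Finset.mem_insert, Finset.mem_singleton] at hM hN
      rcases hM with rfl | rfl <;> rcases hN with rfl | rfl
      · exact absurd rfl hMN
      · exact hdis
      · exact hdis.symm
      · exact absurd rfl hMN)
    rw [Finset.sum_pair hneq] at this
    have g1 := hG a1 b1 ha1 hb1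
    have g2 := hG a2 b2 ha2 hb2
    omega
  · have t := s.pm_sd ma mc
    have hd : Disjoint (sd K a c) ({i ∈ K | (a i).2 ≠ (b i).2 ∧ (d i).2 ≠ (c i).2 ∧ (a i).2 = (c i).2} : Finset ι) := by
      rw [Finset.disjoint_left]
      intro i hi hi'
      simp only [sd, Finset.mem_filter] at hi hi'
      exact hi.2 hi'.2.2.2
    have hu : sd K a c ∪ ({i ∈ K | (a i).2 ≠ (b i).2 ∧ (d i).2 ≠ (c i).2 ∧ (a i).2 = (c i).2} : Finset ι) ⊆ K :=
      Finset.union_subset (Finset.filter_subset _ _) (Finset.filter_subset _ _)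
    have := Finset.card_le_card hu
    rw [Finset.card_union_of_disjoint hd] at this
    omega

end Abstract3

set_option linter.unusedSectionVars false

section Abstract4
open Classical Finset
variable {ι R : Type} [Fintype ι]
variable {V W : Finset (ι → R × Bool)} {K : Finset ι} {p : ι → R → Bool} {v w : ι → R × Bool}

noncomputable def PP (V W : Finset (ι → R × Bool)) (K : Finset ι) (v : ι → R × Bool) (A : Finset ι) :
    Finset (ι → R × Bool) := {u ∈ V ∪ W | df K v u = A}

lemma df_congr {u z : ι → R × Bool} (h : ∀ i ∈ K, (u i).1 = (z i).1) : df K v u = df K v z := by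
  ext i
  simp only [mem_df]
  constructor
  · rintro ⟨h1, h2⟩; exact ⟨h1, by rwa [← h i h1]⟩
  · rintro ⟨h1, h2⟩; exact ⟨h1, by rwa [h i h1]⟩

lemma mem_GG_of_df {u : ι → R × Bool} {i : ι} (hu : u ∈ V ∪ W) (h : df K v u = {i}) :
    u ∈ GG V W K v {i} := by
  simp only [GG, Finset.mem_filter, h]
  exact ⟨hu, Finset.Subset.refl _, by simp⟩

lemma ff_eq_of_mem (g : Good V W) {u : ι → R × Bool} (hu : u ∈ V ∪ W) :
    (u ∈ V ∧ ff V u = 1) ∨ (u ∈ W ∧ ff V u = -1) := by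
  rcases Finset.mem_union.1 hu with h | h
  · left; simp [ff, h]
  · have hn : u ∉ V := fun hv => g.disj u hv h
    right; simp [ff, h, hn]

lemma four_le {α : Type*} {s : Finset α} {a b c d : α} (ha : a ∈ s) (hb : b ∈ s) (hc : c ∈ s) (hd : d ∈ s)
    (h1 : a ≠ b) (h2 : a ≠ c) (h3 : a ≠ d) (h4 : b ≠ c) (h5 : b ≠ d) (h6 : c ≠ d) : 4 ≤ s.card := by
  have h : ({a, b, c, d} : Finset α) ⊆ s := by
    intro x hx
    simp only [Finset.mem_insert, Finset.mem_singleton] at hx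
    rcases hx with rfl | rfl | rfl | rfl <;> assumption
  have := Finset.card_le_card h
  rw [Finset.card_insert_of_notMem (by simp [h1, h2, h3]),
    Finset.card_insert_of_notMem (by simp [h4, h5]), Finset.card_insert_of_notMem (by simp [h6])] at this
  simpa using this

/-- global identity gives a second word with the same bases -/
lemma Good.partner (g : Good V W) (p : ι → R → Bool) {z : ι → R × Bool} (hz : z ∈ V ∪ W) :
    ∃ y ∈ V ∪ W, y ≠ z ∧ ∀ i, (y i).1 = (z i).1 := by
  by_contra hne
  push Not at hne
  have h := g.ident' univ ∅ p (fun i => (z i).1)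
  have hs : ({u ∈ V ∪ W | Cond univ ∅ p (fun i => (z i).1) u} : Finset _) = {z} := by
    ext u
    simp only [Finset.mem_filter, Cond.iff, Finset.mem_singleton]
    constructor
    · rintro ⟨h1, h2, _⟩
      by_contra hu
      obtain ⟨i, hi⟩ := hne u h1 hu
      exact hi (h2 i (Finset.mem_univ i))
    · rintro rfl; exact ⟨hz, fun _ _ => rfl, fun i hi => absurd (Finset.mem_univ i) hi⟩
  rw [hs, Finset.sum_singleton] at h
  rcases ff_cases V z with h1 | h1 <;> rcases sgn_cases univ z with h2 | h2 <;> simp [h1, h2] at h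

lemma Good.classA (g : Good V W) {i : ι} (hi : i ∈ K) {z : ι → R × Bool} (hz : z ∈ V ∪ W)
    (hl : ∀ j, j ∉ K → p j (z j).1 = (z j).2) (hdf : df K v z = {i})
    (hG : (GG V W K v {i}).card ≤ 3) :
    ∃ z', z' ≠ z ∧ z' ∈ V ∪ W ∧ (∀ j, j ∉ K → p j (z' j).1 = (z' j).2) ∧
      (∀ j ∈ K, (z' j).1 = (z j).1) ∧
      (({u ∈ V ∪ W | Cond K ∅ p (fun i => (z i).1) u} : Finset _) = {z, z'}) ∧
      ff V z' * sgn K z' = - (ff V z * sgn K z) ∧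
      (∀ a ∈ K, a ≠ i → (z a).2 ≠ (z' a).2 → 2 ≤ (PP V W K v {i, a}).card) ∧
      ∃ a ∈ K, a ≠ i ∧ (z a).2 ≠ (z' a).2 := by
  set C := ({u ∈ V ∪ W | Cond K ∅ p (fun i => (z i).1) u} : Finset _) with hC
  have hzC : z ∈ C := by
    simp only [hC, Finset.mem_filter, Cond.iff]
    exact ⟨hz, fun _ _ => trivial, hl⟩
  have hCs : C ⊆ GG V W K v {i} := by
    intro u hu
    simp only [hC, Finset.mem_filter, Cond.iff] at hu
    exact mem_GG_of_df hu.1 ((df_congr hu.2.1).trans hdf)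
  have hCc := (Finset.card_le_card hCs).trans hG
  have hsum : ∑ u ∈ C, ff V u * sgn K u = 0 := g.ident' K ∅ p (fun i => (z i).1)
  have hpm : ∀ u, ff V u * sgn K u = 1 ∨ ff V u * sgn K u = -1 := by
    intro u
    rcases ff_cases V u with h1 | h1 <;> rcases sgn_cases K u with h2 | h2 <;> simp [h1, h2]
  have hpos : 1 ≤ C.card := Finset.card_pos.2 ⟨z, hzC⟩
  have hcard : C.card = 2 := by
    have h3 : C.card = 1 ∨ C.card = 2 ∨ C.card = 3 := by omega
    rcases h3 with h3 | h3 | h3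
    · obtain ⟨a, ha⟩ := Finset.card_eq_one.1 h3
      rw [ha, Finset.sum_singleton] at hsum
      rcases hpm a with h | h <;> rw [h] at hsum <;> simp at hsum
    · exact h3
    · obtain ⟨a, b, c, hab, hac, hbc, h⟩ := Finset.card_eq_three.1 h3
      rw [h, Finset.sum_insert (by simp [hab, hac]), Finset.sum_pair hbc] at hsum
      rcases hpm a with h1 | h1 <;> rcases hpm b with h2 | h2 <;> rcases hpm c with h3 | h3 <;>
        rw [h1, h2, h3] at hsum <;> simp at hsum
  obtain ⟨z', hz'⟩ : ∃ z', C.erase z = {z'} :=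
    Finset.card_eq_one.1 (by rw [Finset.card_erase_of_mem hzC, hcard])
  have hz'C : z' ∈ C.erase z := by rw [hz']; simp
  have hne : z' ≠ z := (Finset.mem_erase.1 hz'C).1
  have hCeq : C = {z, z'} := by rw [← Finset.insert_erase hzC, hz']
  have hz'm : z' ∈ V ∪ W ∧ (∀ j ∈ K, (z' j).1 = (z j).1) ∧ ∀ j, j ∉ K → p j (z' j).1 = (z' j).2 := by
    have := (Finset.mem_erase.1 hz'C).2
    simpa only [hC, Finset.mem_filter, Cond.iff] using this
  obtain ⟨hz'U, hz'b, hz'l⟩ := hz'm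
  have hopp : ff V z' * sgn K z' = - (ff V z * sgn K z) := by
    rw [hCeq, Finset.sum_pair hne.symm] at hsum
    linarith
  refine ⟨z', hne, hz'U, hz'l, hz'b, hCeq, hopp, ?_, ?_⟩
  · intro a ha hai hsd
    have hM : ({a} : Finset ι) ⊆ K := by simpa using ha
    have hline := g.line hM p (fun i => (z i).1)
    rw [← hC, hCeq, Finset.sum_pair hne.symm, sgn_sdiff hM, sgn_sdiff hM, ← mul_assoc, ← mul_assoc,
      hopp, sgn_single, sgn_single] at hline
    have h2 : |ff V z * sgn K z * sg (z a).2 + -(ff V z * sgn K z) * sg (z' a).2| = 2 := by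
      rcases hpm z with h | h <;> rw [h] <;> revert hsd <;> generalize (z a).2 = b <;>
        generalize (z' a).2 = b' <;> revert b b' <;> decide
    rw [h2] at hline
    have hsub : ({u ∈ V ∪ W | Cond (K \ {a}) {a} p (fun i => (z i).1) u ∧
        ¬ Cond K ∅ p (fun i => (z i).1) u} : Finset _) ⊆ PP V W K v {i, a} := by
      intro u hu
      simp only [Finset.mem_filter, Cond.iff, Cond.iff' hM, Finset.mem_singleton] at hu
      simp only [PP, Finset.mem_filter]
      refine ⟨hu.1, ?_⟩
      have hza : (z a).1 = (v a).1 := by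
        by_contra hc
        have : a ∈ df K v z := mem_df.2 ⟨ha, hc⟩
        rw [hdf] at this
        exact hai (by simpa using this)
      have hua : (u a).1 ≠ (z a).1 := by
        intro h
        apply hu.2.2
        refine ⟨fun j hj => ?_, hu.2.1.2⟩
        by_cases hja : j = a
        · rw [hja]; exact h
        · exact hu.2.1.1 j hj hja
      ext j
      simp only [mem_df, Finset.mem_insert, Finset.mem_singleton]
      by_cases hja : j = a
      · subst hja
        simp only [ha, true_and, or_true, iff_true]
        rw [← hza]; exact hua
      · have h4 : (j ∈ K ∧ (z j).1 ≠ (v j).1) ↔ j = i := by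
          rw [← mem_df, hdf, Finset.mem_singleton]
        simp only [hja, or_false]
        rw [← h4]
        constructor
        · rintro ⟨h5, h6⟩; exact ⟨h5, by rw [← hu.2.1.1 j h5 hja]; exact h6⟩
        · rintro ⟨h5, h6⟩; exact ⟨h5, by rw [hu.2.1.1 j h5 hja]; exact h6⟩
    have := Finset.card_le_card hsub
    have h5 : (2 : ℤ) ≤ (PP V W K v {i, a}).card := hline.trans (by exact_mod_cast this)
    exact_mod_cast h5
  · by_contra hcon
    push Not at hcon
    have hag : ∀ a ∈ K, a ≠ i → z a = z' a := fun a ha hai =>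
      Prod.ext (hz'b a ha).symm (hcon a ha hai)
    have hoff : ∀ q, q ∉ K → z q ≠ z' q → (z q).1 ≠ (z' q).1 := by
      intro q hq hn he
      exact hn (Prod.ext he (by rw [← hl q hq, ← hz'l q hq, he]))
    have hq : ∃ q, q ∉ K ∧ (z q).1 ≠ (z' q).1 := by
      have same : ∀ (U : Finset (ι → R × Bool)), (∀ u ∈ U, ∀ v ∈ U, u ≠ v → ∃ i, Dic (u i) (v i)) →
        (∀ u ∈ U, ∀ v ∈ U, ∀ i, Dic (u i) (v i) → ∃ j, j ≠ i ∧ u j ≠ v j) → z ∈ U → z' ∈ U →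
        ∃ q, q ∉ K ∧ (z q).1 ≠ (z' q).1 := by
        intro U hd ht hzU hz'U
        obtain ⟨j, hj⟩ := hd z hzU z' hz'U hne.symm
        have hji : j = i := by
          by_contra hji
          by_cases hjK : j ∈ K
          · exact hj.2 (by rw [hag j hjK hji])
          · exact not_dic_of_pat (hl j hjK) (hz'l j hjK) hj
        subst hji
        obtain ⟨q, hq1, hq2⟩ := ht z hzU z' hz'U j hj
        have hqK : q ∉ K := fun h => hq2 (hag q h hq1)
        exact ⟨q, hqK, hoff q hqK hq2⟩
      have oppo : ff V z = - ff V z' → ∃ q, q ∉ K ∧ (z q).1 ≠ (z' q).1 := by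
        intro hf
        have hsg : sgn K z' = sgn K z := by
          rw [hf] at hopp
          rcases ff_cases V z' with h | h <;> rw [h] at hopp <;> linarith
        have hM : ({i} : Finset ι) ⊆ K := by simpa using hi
        have e1 : sgn (K \ {i}) z = sgn (K \ {i}) z' := by
          unfold sgn
          refine Finset.prod_congr rfl fun a ha => ?_
          simp only [Finset.mem_sdiff, Finset.mem_singleton] at ha
          rw [hag a ha.1 ha.2]
        rw [sgn_sdiff hM, sgn_sdiff hM, hsg, sgn_single, sgn_single] at e1
        have e2 : (z i).2 = (z' i).2 := by
          rcases sgn_cases K z with h | h <;> rw [h] at e1 <;> revert e1 <;>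
            generalize (z i).2 = b <;> generalize (z' i).2 = b' <;> revert b b' <;> decide
        obtain ⟨q, hq⟩ := Function.ne_iff.1 hne.symm
        have hqK : q ∉ K := by
          intro h
          by_cases hqi : q = i
          · subst hqi; exact hq (Prod.ext (hz'b q h).symm e2)
          · exact hq (hag q h hqi)
        exact ⟨q, hqK, hoff q hqK hq⟩
      rcases ff_eq_of_mem g hz with ⟨h1, h2⟩ | ⟨h1, h2⟩ <;>
        rcases ff_eq_of_mem g hz'U with ⟨h3, h4⟩ | ⟨h3, h4⟩
      · exact same V g.dV g.tV h1 h3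
      · exact oppo (by rw [h2, h4]; rfl)
      · exact oppo (by rw [h2, h4])
      · exact same W g.dW g.tW h1 h3
    obtain ⟨q, -, hq⟩ := hq
    obtain ⟨y, hy, hyz, hyb⟩ := g.partner p hz
    obtain ⟨y', hy', hyz', hyb'⟩ := g.partner p hz'U
    have m1 : z ∈ GG V W K v {i} := mem_GG_of_df hz hdf
    have m2 : y ∈ GG V W K v {i} := mem_GG_of_df hy ((df_congr fun j _ => hyb j).trans hdf)
    have m3 : z' ∈ GG V W K v {i} := mem_GG_of_df hz'U ((df_congr hz'b).trans hdf)
    have m4 : y' ∈ GG V W K v {i} :=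
      mem_GG_of_df hy' ((df_congr fun j hj => (hyb' j).trans (hz'b j hj)).trans hdf)
    have := four_le m1 m2 m3 m4 hyz.symm hne.symm
      (by rintro rfl; exact hq (hyb' q)) (by rintro rfl; exact hq (hyb q).symm)
      (by rintro rfl; exact hq ((hyb q).symm.trans (hyb' q))) hyz'.symm
    omega

end Abstract4

set_option linter.unusedSectionVars false

section Abstract5
open Classical Finset
variable {ι R : Type} [Fintype ι]
variable {V W : Finset (ι → R × Bool)} {K : Finset ι} {p : ι → R → Bool} {v w : ι → R × Bool}

lemma Side.exists_v' (s : Side V W K p v w) : ∃ v' ∈ XX V K p v, sgn K v' ≠ sgn K v := by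
  have h1 := s.Xp_pos
  have h2 := s.Xpm
  obtain ⟨a, ha⟩ := Finset.card_pos.1 (show 0 < (Xp V K p v).card by omega)
  obtain ⟨b, hb⟩ := Finset.card_pos.1 (show 0 < (Xm V K p v).card by omega)
  by_cases h : sgn K a = sgn K v
  · refine ⟨b, Xm_sub hb, fun h' => Xpm_ne ha hb (h.trans h'.symm)⟩
  · exact ⟨a, Xp_sub ha, h⟩

lemma Side.X_two (s : Side V W K p v w) (h : (XX V K p v).card = 2) :
    ∃ v', v' ≠ v ∧ XX V K p v = {v, v'} ∧ sgn K v' = - sgn K v := by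
  obtain ⟨v', hv', hs⟩ := s.exists_v'
  have hne : v' ≠ v := fun h => hs (by rw [h])
  refine ⟨v', hne, ?_, ?_⟩
  · symm
    apply Finset.eq_of_subset_of_card_le
    · intro x hx
      simp only [Finset.mem_insert, Finset.mem_singleton] at hx
      rcases hx with rfl | rfl
      · exact s.v_mem
      · exact hv'
    · rw [h, Finset.card_pair hne.symm]
  · rcases sgn_cases K v with a | a <;> rcases sgn_cases K v' with b | b <;> rw [a, b] at hs ⊢ <;>
      simp at hs ⊢

/-- on a sign-difference coordinate of a two-element set there are two local words on the line -/
lemma Side.line_two (s : Side V W K p v w) {v' : ι → R × Bool} (hne : v' ≠ v)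
    (hX : XX V K p v = {v, v'}) (hs : sgn K v' = - sgn K v) {i : ι} (hi : i ∈ sd K v v') :
    2 ≤ (GG V W K v {i}).card ∧
    ∃ z ∈ V ∪ W, (∀ j, j ∉ K → p j (z j).1 = (z j).2) ∧ df K v z = {i} := by
  simp only [sd, Finset.mem_filter] at hi
  have hM : ({i} : Finset ι) ⊆ K := by simpa using hi.1
  have h2 : |sgn K v * sg (v i).2 + -(sgn K v) * sg (v' i).2| = 2 := by
    have hsd := hi.2
    rcases sgn_cases K v with h | h <;> rw [h] <;> revert hsd <;> generalize (v i).2 = b <;>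
      generalize (v' i).2 = b' <;> revert b b' <;> decide
  constructor
  · have h := s.X_line hM
    rw [hX, Finset.sum_pair hne.symm, sgn_sdiff hM, sgn_sdiff hM, hs, sgn_single, sgn_single, h2] at h
    exact_mod_cast h
  · have h := s.good.line hM p (fun i => (v i).1)
    rw [s.XX_eq, Finset.sum_congr rfl (fun x hx => by rw [ff_XX hx, one_mul]),
      hX, Finset.sum_pair hne.symm, sgn_sdiff hM, sgn_sdiff hM, hs, sgn_single, sgn_single, h2] at h
    have h0 : 0 < ({u ∈ V ∪ W | Cond (K \ {i}) {i} p (fun i => (v i).1) u ∧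
        ¬ Cond K ∅ p (fun i => (v i).1) u} : Finset _).card := by omega
    obtain ⟨z, hz⟩ := Finset.card_pos.1 h0
    simp only [Finset.mem_filter, Cond.iff, Cond.iff' hM, Finset.mem_singleton] at hz
    refine ⟨z, hz.1, hz.2.1.2, ?_⟩
    ext j
    simp only [mem_df, Finset.mem_singleton]
    constructor
    · rintro ⟨h3, h4⟩
      by_contra hj
      exact h4 (hz.2.1.1 j h3 hj)
    · rintro rfl
      refine ⟨hi.1, fun h3 => hz.2.2 ⟨fun k hk => ?_, hz.2.1.2⟩⟩
      by_cases hkj : k = j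
      · rw [hkj]; exact h3
      · exact hz.2.1.1 k hk hkj

/-- words at distance exactly two -/
noncomputable def R2 (V W : Finset (ι → R × Bool)) (K : Finset ι) (v : ι → R × Bool) :
    Finset (ι → R × Bool) := {u ∈ V ∪ W | (df K v u).card = 2}

lemma Side.ball2_ge (s : Side V W K p v w) (D : Finset ι) :
    (XX V K p v).card + ∑ i ∈ D, (GG V W K v {i}).card + (R2 V W K v).card ≤ (ball V W K v 2).card := by
  have h := s.ball1_ge D
  have hd : Disjoint (ball V W K v 1) (R2 V W K v) := by
    rw [Finset.disjoint_left]
    intro u hu hu'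
    simp only [ball, R2, Finset.mem_filter] at hu hu'
    omega
  have hu : ball V W K v 1 ∪ R2 V W K v ⊆ ball V W K v 2 := by
    intro u hu
    simp only [ball, R2, Finset.mem_union (s := Finset.filter _ _), Finset.mem_filter] at hu ⊢
    rcases hu with hu | hu
    · exact ⟨hu.1, by omega⟩
    · exact ⟨hu.1, by omega⟩
  have := Finset.card_le_card hu
  rw [Finset.card_union_of_disjoint hd] at this
  omega

lemma PP_sub {A : Finset ι} (hA : A.card = 2) : PP V W K v A ⊆ R2 V W K v := by
  intro u hu
  simp only [PP, R2, Finset.mem_filter] at hu ⊢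
  exact ⟨hu.1, by rw [hu.2, hA]⟩

lemma PP_disj {A B : Finset ι} (h : A ≠ B) : Disjoint (PP V W K v A) (PP V W K v B) := by
  rw [Finset.disjoint_left]
  intro u hu hu'
  simp only [PP, Finset.mem_filter] at hu hu'
  exact h (hu.2.symm.trans hu'.2)

lemma PP_two {A B : Finset ι} (hA : A.card = 2) (hB : B.card = 2) (h : A ≠ B) :
    (PP V W K v A).card + (PP V W K v B).card ≤ (R2 V W K v).card := by
  rw [← Finset.card_union_of_disjoint (PP_disj h)]
  exact Finset.card_le_card (Finset.union_subset (PP_sub hA) (PP_sub hB))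

lemma Side.claimC (s : Side V W K p v w) {v' : ι → R × Bool} (hne : v' ≠ v)
    (hX : XX V K p v = {v, v'}) (hs : sgn K v' = - sgn K v) {i : ι} (hi : i ∈ sd K v v') :
    4 ≤ (GG V W K v {i}).card ∨ ∃ a, a ≠ i ∧ 2 ≤ (PP V W K v {i, a}).card := by
  by_cases hG : 4 ≤ (GG V W K v {i}).card
  · exact Or.inl hG
  right
  obtain ⟨-, z, hz, hl, hdf⟩ := s.line_two hne hX hs hi
  have hiK : i ∈ K := (Finset.mem_filter.1 hi).1
  obtain ⟨z', -, -, -, -, -, -, h7, a, ha, hai, hsd⟩ := s.good.classA hiK hz hl hdf (by omega)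
  exact ⟨a, hai, h7 a ha hai hsd⟩

lemma Side.h1 (s : Side V W K p v w) (h : (XX V K p v).card = 2) :
    12 ≤ (ball V W K v 1).card ∨ 12 ≤ (ball V W K v 2).card := by
  obtain ⟨v', hne, hX, hs⟩ := s.X_two h
  have hv' : v' ∈ XX V K p v := by rw [hX]; simp
  obtain ⟨hodd, h3⟩ := s.sd_ge s.v_mem hv' (by
    rw [hs]; rcases sgn_cases K v with h | h <;> rw [h] <;> decide)
  by_cases h5 : 5 ≤ (sd K v v').card
  · left
    have hb := s.ball1_ge (sd K v v')
    have : ∑ i ∈ sd K v v', 2 ≤ ∑ i ∈ sd K v v', (GG V W K v {i}).card :=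
      Finset.sum_le_sum fun i hi => (s.line_two hne hX hs hi).1
    simp at this
    omega
  · right
    have h3' : (sd K v v').card = 3 := by obtain ⟨k, hk⟩ := hodd; omega
    obtain ⟨i, j, k, hij, hik, hjk, hD⟩ := Finset.card_eq_three.1 h3'
    have mi : i ∈ sd K v v' := by simp [hD]
    have mj : j ∈ sd K v v' := by simp [hD]
    have mk : k ∈ sd K v v' := by simp [hD]
    have hb := s.ball2_ge (sd K v v')
    rw [hD, Finset.sum_insert (by simp [hij, hik]), Finset.sum_pair hjk] at hb
    have l1 := (s.line_two hne hX hs mi).1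
    have l2 := (s.line_two hne hX hs mj).1
    have l3 := (s.line_two hne hX hs mk).1
    have one : ∀ i a, a ≠ i → 2 ≤ (PP V W K v {i, a}).card → 2 ≤ (R2 V W K v).card :=
      fun i a hai h2 => h2.trans (Finset.card_le_card (PP_sub (Finset.card_pair hai.symm)))
    rcases s.claimC hne hX hs mi with c1 | ⟨a, ha, c1⟩ <;>
    rcases s.claimC hne hX hs mj with c2 | ⟨b, hb', c2⟩ <;>
    rcases s.claimC hne hX hs mk with c3 | ⟨c, hc, c3⟩
    · omega
    · omega
    · omega
    · have := one _ _ hb' c2; omega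
    · omega
    · have := one _ _ ha c1; omega
    · have := one _ _ ha c1; omega
    · have h4 : 4 ≤ (R2 V W K v).card := by
        by_cases e1 : ({i, a} : Finset ι) = {j, b}
        · by_cases e2 : ({i, a} : Finset ι) = {k, c}
          · exfalso
            have m1 : j ∈ ({i, a} : Finset ι) := by rw [e1]; simp
            have m2 : k ∈ ({i, a} : Finset ι) := by rw [e2]; simp
            simp only [Finset.mem_insert, Finset.mem_singleton] at m1 m2
            rcases m1 with m1 | m1
            · exact hij m1.symm
            · rcases m2 with m2 | m2
              · exact hik m2.symm
              · exact hjk (m1.trans m2.symm)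
          · have := PP_two (V := V) (W := W) (K := K) (v := v) (Finset.card_pair ha.symm) (Finset.card_pair hc.symm) e2
            omega
        · have := PP_two (V := V) (W := W) (K := K) (v := v) (Finset.card_pair ha.symm) (Finset.card_pair hb'.symm) e1
          omega
      omega

lemma Side.dStep (s : Side V W K p v w) {v' : ι → R × Bool} (hne : v' ≠ v)
    (hX : XX V K p v = {v, v'}) {i : ι} (hi : i ∈ sd K v v') (hK2 : 2 ≤ K.card)
    {y : ι → R × Bool} (hy : y ∈ XX W K p w) (t : R → Bool) (ht : t (y i).1 = (y i).2) :
    ∃ u ∈ V, (∀ j, j ∉ K → p j (u j).1 = (u j).2) ∧ df K v u = {i} ∧ t (u i).1 = (u i).2 := by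
  simp only [sd, Finset.mem_filter] at hi
  have hv' : v' ∈ XX V K p v := by rw [hX]; simp
  by_contra hcon
  push Not at hcon
  have hid := s.good.ident' (K \ {i}) ∅ (Function.update p i t) (fun i => (v i).1)
  have cond : ∀ u, Cond (K \ {i}) ∅ (Function.update p i t) (fun i => (v i).1) u ↔
      (∀ j ∈ K, j ≠ i → (u j).1 = (v j).1) ∧ (∀ j, j ∉ K → p j (u j).1 = (u j).2) ∧
      t (u i).1 = (u i).2 := by
    intro u
    unfold Cond
    constructor
    · rintro ⟨h1, h2⟩
      refine ⟨fun j hj hji => h1 j (by simp [hj, hji]), fun j hj => ?_, ?_⟩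
      · have := h2 j (by simp [hj]) (by simp)
        rwa [Function.update_of_ne (by rintro rfl; exact hj hi.1)] at this
      · have := h2 i (by simp) (by simp)
        rwa [Function.update_self] at this
    · rintro ⟨h1, h2, h3⟩
      refine ⟨fun j hj => h1 j (by simp at hj; exact hj.1) (by simp at hj; exact hj.2), fun j hj _ => ?_⟩
      by_cases hji : j = i
      · subst hji; rwa [Function.update_self]
      · rw [Function.update_of_ne hji]; apply h2; simp at hj; tauto
  have hset : ∃ x, ({u ∈ V ∪ W | Cond (K \ {i}) ∅ (Function.update p i t) (fun i => (v i).1) u} :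
      Finset _) = {x} := by
    have hvv : (v' i).1 = (v i).1 := s.X_base hv' i
    have claim : ∀ u ∈ V ∪ W, Cond (K \ {i}) ∅ (Function.update p i t) (fun i => (v i).1) u →
        u ∈ XX V K p v := by
      intro u hu hc
      rw [cond] at hc
      by_cases hb : (u i).1 = (v i).1
      · rw [← s.XX_eq, Finset.mem_filter, Cond.iff]
        refine ⟨hu, fun j hj => ?_, hc.2.1⟩
        by_cases hji : j = i
        · rw [hji]; exact hb
        · exact hc.1 j hj hji
      · exfalso
        have hdf : df K v u = {i} := by
          ext j
          simp only [mem_df, Finset.mem_singleton]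
          constructor
          · rintro ⟨h3, h4⟩
            by_contra hj
            exact h4 (hc.1 j h3 hj)
          · rintro rfl
            exact ⟨hi.1, hb⟩
        rcases Finset.mem_union.1 hu with hu | hu
        · exact hcon u hu hc.2.1 hdf hc.2.2
        · obtain ⟨k, hk, hki⟩ := Finset.exists_mem_ne (show 1 < K.card by omega) i
          have huy : u = y := by
            by_contra hne
            obtain ⟨j, hj⟩ := s.good.dW u hu y (XX_sub hy) hne
            by_cases hji : j = i
            · subst hji; exact not_dic_of_pat hc.2.2 ht hj
            · by_cases hjK : j ∈ K
              · have := hj.1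
                rw [hc.1 j hjK hji, s.symm.X_base hy] at this
                exact s.hK j hjK this
              · refine not_dic_of_pat (hc.2.1 j hjK) ?_ hj
                rw [s.symm.X_off hy j hjK]; exact s.hpw j
          have h1 := hc.1 k hk hki
          rw [huy, s.symm.X_base hy] at h1
          exact s.hK k hk h1.symm
    have inc : ∀ u ∈ XX V K p v, t (u i).1 = (u i).2 →
      Cond (K \ {i}) ∅ (Function.update p i t) (fun i => (v i).1) u := by
      intro u hu h
      rw [cond]
      refine ⟨fun j _ _ => s.X_base hu j, fun j hj => ?_, h⟩
      rw [s.X_off hu j hj]; exact s.hpv j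
    by_cases htv : t (v i).1 = (v i).2
    · refine ⟨v, ?_⟩
      ext u
      simp only [Finset.mem_filter, Finset.mem_singleton]
      constructor
      · rintro ⟨hu, hc⟩
        have := claim u hu hc
        rw [hX] at this
        simp only [Finset.mem_insert, Finset.mem_singleton] at this
        rcases this with h | rfl
        · exact h
        · exfalso
          rw [cond] at hc
          have := hc.2.2
          rw [hvv, htv] at this
          exact hi.2 this
      · rintro rfl
        exact ⟨Finset.mem_union_left _ s.hv, inc u s.v_mem htv⟩
    · have htv' : t (v' i).1 = (v' i).2 := by
        rw [hvv]
        have := hi.2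
        revert this htv
        generalize t (v i).1 = a
        generalize (v i).2 = b
        generalize (v' i).2 = c
        revert a b c; decide
      refine ⟨v', ?_⟩
      ext u
      simp only [Finset.mem_filter, Finset.mem_singleton]
      constructor
      · rintro ⟨hu, hc⟩
        have := claim u hu hc
        rw [hX] at this
        simp only [Finset.mem_insert, Finset.mem_singleton] at this
        rcases this with rfl | h
        · exfalso
          rw [cond] at hc
          exact htv hc.2.2
        · exact h
      · rintro rfl
        exact ⟨Finset.mem_union_left _ (XX_sub hv'), inc u hv' htv'⟩
  obtain ⟨x, hx⟩ := hset
  rw [hx, Finset.sum_singleton] at hid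
  rcases ff_cases V x with h1 | h1 <;> rcases sgn_cases (K \ {i}) x with h2 | h2 <;> simp [h1, h2] at hid

/-- words at distance two with `i` in the difference set -/
noncomputable def PI (V W : Finset (ι → R × Bool)) (K : Finset ι) (v : ι → R × Bool) (i : ι) :
    Finset (ι → R × Bool) := {u ∈ V ∪ W | (df K v u).card = 2 ∧ i ∈ df K v u}

lemma Side.claimD (s : Side V W K p v w) {v' w' : ι → R × Bool} (hne : v' ≠ v)
    (hX : XX V K p v = {v, v'}) (hY : XX W K p w = {w, w'})
    {i : ι} (hi : i ∈ sd K v v') (hi' : i ∈ sd K w w') (hK2 : 2 ≤ K.card) :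
    4 ≤ (GG V W K v {i}).card ∨ 4 ≤ (PI V W K v i).card := by
  by_cases hG : 4 ≤ (GG V W K v {i}).card
  · exact Or.inl hG
  right
  have hG' : (GG V W K v {i}).card ≤ 3 := by omega
  have hiK : i ∈ K := (Finset.mem_filter.1 hi).1
  have hw'Y : w' ∈ XX W K p w := by rw [hY]; simp
  obtain ⟨z, hzV, hzl, hzd, -⟩ := s.dStep hne hX hi hK2 s.symm.v_mem (p i) (s.hpw i)
  have hzU : z ∈ V ∪ W := Finset.mem_union_left _ hzV
  obtain ⟨z', hz'ne, hz'U, hz'l, hz'b, hC, hopp, hPP, a, haK, hai, hasd⟩ :=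
    s.good.classA hiK hzU hzl hzd hG'
  have ht : ∃ y ∈ XX W K p w, (if (y i).1 = (z i).1 then !(z i).2 else (w i).2) = (y i).2 := by
    by_cases hb : (w i).1 = (z i).1
    · by_cases hs : (!(z i).2) = (w i).2
      · exact ⟨w, s.symm.v_mem, by rw [if_pos hb, hs]⟩
      · refine ⟨w', hw'Y, ?_⟩
        rw [if_pos (by rw [s.symm.X_base hw'Y i, hb])]
        have h2 := (Finset.mem_filter.1 hi').2
        revert hs h2
        generalize (z i).2 = a
        generalize (w i).2 = b
        generalize (w' i).2 = c
        revert a b c; decide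
    · exact ⟨w, s.symm.v_mem, by rw [if_neg hb]⟩
  obtain ⟨y, hyY, hyt⟩ := ht
  obtain ⟨z2, hz2V, hz2l, hz2d, hz2t⟩ := s.dStep hne hX hi hK2 hyY
    (fun r => if r = (z i).1 then !(z i).2 else (w i).2) hyt
  have hz2U : z2 ∈ V ∪ W := Finset.mem_union_left _ hz2V
  have hz2z : z2 ≠ z := by
    rintro rfl
    simp at hz2t
  have hz2 : z2 = z' := by
    by_contra hcon
    have hz2C : z2 ∉ ({u ∈ V ∪ W | Cond K ∅ p (fun i => (z i).1) u} : Finset _) := by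
      rw [hC]; simp [hz2z, hcon]
    have hnb : ¬ ∀ j ∈ K, (z2 j).1 = (z j).1 := by
      intro h
      apply hz2C
      rw [Finset.mem_filter, Cond.iff]
      exact ⟨hz2U, h, hz2l⟩
    obtain ⟨y2, hy2ne, hy2U, -, hy2b, -⟩ := s.good.classA hiK hz2U hz2l hz2d hG'
    have := four_le (mem_GG_of_df hzU hzd) (mem_GG_of_df hz'U ((df_congr hz'b).trans hzd))
      (mem_GG_of_df hz2U hz2d) (mem_GG_of_df hy2U ((df_congr hy2b).trans hz2d))
      hz'ne.symm hz2z.symm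
      (by rintro rfl; exact hnb fun j hj => (hy2b j hj).symm) (fun h => hcon h.symm)
      (by rintro rfl; exact hnb fun j hj => (hy2b j hj).symm.trans (hz'b j hj)) hy2ne.symm
    omega
  subst hz2
  have hisd : i ∈ sd K z z2 := by
    simp only [sd, Finset.mem_filter]
    refine ⟨hiK, ?_⟩
    simp only [hz'b i hiK, if_true] at hz2t
    rw [← hz2t]; simp
  have hasd' : a ∈ sd K z z2 := by
    simp only [sd, Finset.mem_filter]; exact ⟨haK, hasd⟩
  have hodd : Odd (sd K z z2).card := by
    by_contra hn
    rw [Nat.not_odd_iff_even] at hn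
    have := sgn_mul (K := K) z z2
    rw [hn.neg_one_pow] at this
    simp only [ff, hzV, hz2V, if_true, one_mul] at hopp
    rw [hopp] at this
    rcases sgn_cases K z with h | h <;> rw [h] at this <;> simp at this
  have h3 : 3 ≤ (sd K z z2).card := by
    have h2 : ({i, a} : Finset ι) ⊆ sd K z z2 := by
      intro x hx
      simp only [Finset.mem_insert, Finset.mem_singleton] at hx
      rcases hx with rfl | rfl <;> assumption
    have := Finset.card_le_card h2
    rw [Finset.card_pair hai.symm] at this
    obtain ⟨k, hk⟩ := hodd
    omega
  obtain ⟨b, hb, hba⟩ : ∃ b ∈ (sd K z z2).erase i, b ≠ a := by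
    apply Finset.exists_mem_ne
    rw [Finset.card_erase_of_mem hisd]; omega
  have hbi : b ≠ i := (Finset.mem_erase.1 hb).1
  have hb2 := (Finset.mem_erase.1 hb).2
  simp only [sd, Finset.mem_filter] at hb2
  have p1 := hPP a haK hai hasd
  have p2 := hPP b hb2.1 hbi hb2.2
  have hneq : ({i, a} : Finset ι) ≠ {i, b} := by
    intro h
    have : b ∈ ({i, a} : Finset ι) := by rw [h]; simp
    simp only [Finset.mem_insert, Finset.mem_singleton] at this
    rcases this with h | h
    · exact hbi h
    · exact hba h
  have hsub : PP V W K v {i, a} ∪ PP V W K v {i, b} ⊆ PI V W K v i := by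
    apply Finset.union_subset
    · intro u hu
      simp only [PP, PI, Finset.mem_filter] at hu ⊢
      rw [hu.2]
      exact ⟨hu.1, Finset.card_pair hai.symm, by simp⟩
    · intro u hu
      simp only [PP, PI, Finset.mem_filter] at hu ⊢
      rw [hu.2]
      exact ⟨hu.1, Finset.card_pair hbi.symm, by simp⟩
  have := Finset.card_le_card hsub
  rw [Finset.card_union_of_disjoint (PP_disj hneq)] at this
  omega

end Abstract5

set_option linter.unusedSectionVars false

section Abstract6
open Classical Finset
variable {ι R : Type} [Fintype ι]
variable {V W : Finset (ι → R × Bool)} {K : Finset ι} {p : ι → R → Bool} {v w : ι → R × Bool}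

/-- change the pattern of a side -/
lemma Side.repat (s : Side V W K p v w) (p2 : ι → R → Bool)
    (h1 : ∀ i, p2 i (v i).1 = (v i).2) (h2 : ∀ i, p2 i (w i).1 = (w i).2) :
    Side V W K p2 v w := ⟨s.good, s.hv, s.hw, s.hK, s.hKc, h1, h2, s.max⟩

lemma eq_of_pat {q : R → Bool} {a b : R × Bool} (ha : q a.1 = a.2) (hb : q b.1 = b.2)
    (h : a.1 = b.1) : a = b := Prod.ext h (by rw [← ha, ← hb, h])

lemma eq_of_dic {a b c : R × Bool} (h1 : Dic a c) (h2 : Dic b c) : a = b := by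
  refine Prod.ext (h1.1.trans h2.1.symm) ?_
  have e1 := h1.2
  have e2 := h2.2
  revert e1 e2
  generalize a.2 = x; generalize b.2 = y; generalize c.2 = z
  revert x y z; decide

lemma Side.A0 (s : Side V W K p v w) {v' : ι → R × Bool} (hv' : v' ∈ V)
    (hvo : ∀ q, q ∉ K → v' q = v q) (hvK : ∀ q ∈ K, Dic (v' q) (v q))
    {i j k : ι} (hKm : ∀ q, q ∈ K ↔ q = i ∨ q = j ∨ q = k) (hij : i ≠ j) (hik : i ≠ k) :
    ∃ u ∈ V, Dic (u i) (v i) ∧ (∀ q, q ≠ i → p q (u q).1 = (u q).2) ∧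
      (u j = v j ∨ u k = v k) ∧ ¬ (u j = v j ∧ u k = v k) := by
  have hiK : i ∈ K := (hKm i).2 (by simp)
  have hjK : j ∈ K := (hKm j).2 (by simp)
  have hkK : k ∈ K := (hKm k).2 (by simp)
  obtain ⟨u, hu, h1, h2, h3⟩ := s.flip hiK
  refine ⟨u, hu, ⟨h1, h2⟩, h3, ?_, ?_⟩
  · have hne : u ≠ v' := by
      rintro rfl
      exact not_dic_of_pat (h3 j hij.symm) (s.hpv j) (hvK j hjK)
    obtain ⟨q, hq⟩ := s.good.dV u hu v' hv' hne
    by_cases hqK : q ∈ K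
    · rcases (hKm q).1 hqK with rfl | rfl | rfl
      · exact absurd hq (by
          rw [eq_of_dic ⟨h1, h2⟩ (hvK q hqK)]; exact fun h => h.2 rfl)
      · left; exact eq_of_pat (h3 q hij.symm) (s.hpv q) (hq.1.trans (hvK q hqK).1)
      · right; exact eq_of_pat (h3 q hik.symm) (s.hpv q) (hq.1.trans (hvK q hqK).1)
    · exfalso
      rw [hvo q hqK] at hq
      exact not_dic_of_pat (h3 q (by rintro rfl; exact hqK hiK)) (s.hpv q) hq
  · rintro ⟨ej, ek⟩
    have hb : ∀ q ∈ K, (u q).1 = (v q).1 := by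
      intro q hq
      rcases (hKm q).1 hq with rfl | rfl | rfl
      · exact h1
      · rw [ej]
      · rw [ek]
    have hoff := s.offK hu (fun q hq => h3 q (by rintro rfl; exact hq hiK))
      (fun q hq => by rw [hb q hq]; exact s.hK q hq)
    obtain ⟨q, hq, hne⟩ := s.good.tV u hu v s.hv i ⟨h1, h2⟩
    apply hne
    by_cases hqK : q ∈ K
    · rcases (hKm q).1 hqK with rfl | rfl | rfl
      · exact absurd rfl hq
      · exact ej
      · exact ek
    · exact hoff q hqK

lemma Side.A1 (s : Side V W K p v w) {v' : ι → R × Bool} (hv' : v' ∈ V)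
    (hvo : ∀ q, q ∉ K → v' q = v q) (hvK : ∀ q ∈ K, Dic (v' q) (v q))
    {i j k : ι} (hKm : ∀ q, q ∈ K ↔ q = i ∨ q = j ∨ q = k) (hij : i ≠ j) (hik : i ≠ k)
    (hjk : j ≠ k) {u : ι → R × Bool} (hu : u ∈ V) (hd : Dic (u i) (v i))
    (hp : ∀ q, q ≠ i → p q (u q).1 = (u q).2) (ej : u j = v j) (ek : u k ≠ v k) : u k = w k := by
  have hiK : i ∈ K := (hKm i).2 (by simp)
  have hjK : j ∈ K := (hKm j).2 (by simp)
  have hkK : k ∈ K := (hKm k).2 (by simp)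
  by_contra hcon
  have b1 : (u k).1 ≠ (v k).1 := fun h => ek (eq_of_pat (hp k hik.symm) (s.hpv k) h)
  have b2 : (u k).1 ≠ (w k).1 := fun h => hcon (eq_of_pat (hp k hik.symm) (s.hpw k) h)
  have hoff := s.offK hu (fun q hq => hp q (by rintro rfl; exact hq hiK)) (by
    intro q hq
    rcases (hKm q).1 hq with rfl | rfl | rfl
    · rw [hd.1]; exact s.hK q hq
    · rw [ej]; exact s.hK q hq
    · exact b2)
  have s2 := s.repat (fun q r => if q = k ∧ r = (u k).1 then !(u k).2 else p q r)
    (by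
      intro q
      by_cases hq : q = k
      · subst hq; simp [b1.symm, s.hpv]
      · simp [hq, s.hpv])
    (by
      intro q
      by_cases hq : q = k
      · subst hq; simp [b2.symm, s.hpw]
      · simp [hq, s.hpw])
  obtain ⟨u2, hu2, hd2, hp2, hor, -⟩ := s2.A0 hv' hvo hvK hKm hij hik
  have hp2' : ∀ q, q ≠ i → q ≠ k → p q (u2 q).1 = (u2 q).2 := fun q hq hqk => by
    have := hp2 q hq; simpa [hqk] using this
  have hne : u2 ≠ u := by
    rintro rfl
    have := hp2 k hik.symm
    simp at this
  obtain ⟨q, hq⟩ := s.good.dV u2 hu2 u hu hne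
  have hqk : q = k := by
    by_contra hqk
    by_cases hqi : q = i
    · subst hqi; rw [eq_of_dic hd2 hd] at hq; exact hq.2 rfl
    · exact not_dic_of_pat (hp2' q hqi hqk) (hp q hqi) hq
  subst hqk
  have ej2 : u2 j = v j := by
    rcases hor with h | h
    · exact h
    · exfalso; apply b1; rw [← hq.1, h]
  have hoff2 := s.offK hu2 (fun r hr => hp2' r (by rintro rfl; exact hr hiK) (by rintro rfl; exact hr hkK)) (by
    intro r hr
    rcases (hKm r).1 hr with rfl | rfl | rfl
    · rw [hd2.1]; exact s.hK r hr
    · rw [ej2]; exact s.hK r hr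
    · rw [hq.1]; exact b2)
  obtain ⟨r, hr, hne2⟩ := s.good.tV u2 hu2 u hu q hq
  apply hne2
  by_cases hrK : r ∈ K
  · rcases (hKm r).1 hrK with rfl | rfl | rfl
    · exact eq_of_dic hd2 hd
    · rw [ej2, ej]
    · exact absurd rfl hr
  · rw [hoff r hrK, hoff2 r hrK]

structure AA (V : Finset (ι → R × Bool)) (K : Finset ι) (v : ι → R × Bool) (i j k : ι)
    (p2 : ι → R → Bool) (w1 u : ι → R × Bool) : Prop where
  mem : u ∈ V
  dic : Dic (u i) (v i)
  pat : ∀ q, q ∉ K → p2 q (u q).1 = (u q).2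
  typ : (u j = v j ∧ u k = w1 k) ∨ (u k = v k ∧ u j = w1 j)
  one : ∀ q q', q ∉ K → q' ∉ K → u q ≠ v q → u q' ≠ v q' → q = q'

lemma AA.swap {i j k : ι} {p2 : ι → R → Bool} {w1 u : ι → R × Bool} (h : AA V K v i j k p2 w1 u) :
    AA V K v i k j p2 w1 u := ⟨h.mem, h.dic, h.pat, h.typ.symm, h.one⟩

lemma Side.one_aux (s : Side V W K p v w) (hc : K.card = 3)
    {i j k : ι} (hKm : ∀ q, q ∈ K ↔ q = i ∨ q = j ∨ q = k) (hij : i ≠ j)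
    {u : ι → R × Bool} (hu : u ∈ V) (hd : Dic (u i) (v i))
    (hp : ∀ q, q ≠ i → p q (u q).1 = (u q).2) (ej : u j = v j) (ek : u k = w k) :
    ∀ q q', q ∉ K → q' ∉ K → u q ≠ v q → u q' ≠ v q' → q = q' := by
  have hiK : i ∈ K := (hKm i).2 (by simp)
  have hjK : j ∈ K := (hKm j).2 (by simp)
  intro q q' hq hq' h1 h2
  by_contra hqq
  have hb : (u i).1 ≠ (w i).1 := by rw [hd.1]; exact s.hK i hiK
  have hm := s.max u hu w s.hw (by
    intro r hr
    by_cases hri : r = i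
    · subst hri; exact hb hr.1
    · exact not_dic_of_pat (hp r hri) (s.hpw r) hr)
  have m1 : i ∈ ({i | u i ≠ w i} : Finset ι) := by
    simp only [Finset.mem_filter, Finset.mem_univ, true_and]; intro h; exact hb (by rw [h])
  have m2 : j ∈ ({i | u i ≠ w i} : Finset ι) := by
    simp only [Finset.mem_filter, Finset.mem_univ, true_and]; intro h; rw [ej] at h; exact s.hK j hjK (by rw [h])
  have m3 : q ∈ ({i | u i ≠ w i} : Finset ι) := by
    simp only [Finset.mem_filter, Finset.mem_univ, true_and]; rwa [← s.hKc q hq]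
  have m4 : q' ∈ ({i | u i ≠ w i} : Finset ι) := by
    simp only [Finset.mem_filter, Finset.mem_univ, true_and]; rwa [← s.hKc q' hq']
  have hne : ∀ a ∈ K, ∀ b, b ∉ K → a ≠ b := by rintro a ha b hb rfl; exact hb ha
  have := four_le m1 m2 m3 m4 hij (hne i hiK q hq) (hne i hiK q' hq') (hne j hjK q hq) (hne j hjK q' hq') hqq
  omega

lemma Side.exAA (s : Side V W K p v w) (hc : K.card = 3) {v' : ι → R × Bool} (hv' : v' ∈ V)
    (hvo : ∀ q, q ∉ K → v' q = v q) (hvK : ∀ q ∈ K, Dic (v' q) (v q))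
    {i j k : ι} (hKm : ∀ q, q ∈ K ↔ q = i ∨ q = j ∨ q = k) (hij : i ≠ j) (hik : i ≠ k)
    (hjk : j ≠ k) (p2 : ι → R → Bool) (hp2 : ∀ q, q ∉ K → p2 q (v q).1 = (v q).2)
    {w1 : ι → R × Bool} (hw1 : w1 ∈ W) (hwo : ∀ q, q ∉ K → w1 q = w q)
    (hwK : ∀ q ∈ K, (w1 q).1 = (w q).1) : ∃ u, AA V K v i j k p2 w1 u := by
  have hKm' : ∀ q, q ∈ K ↔ q = i ∨ q = k ∨ q = j := by intro q; rw [hKm q]; tauto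
  have hiK : i ∈ K := (hKm i).2 (by simp)
  have s2 : Side V W K (fun q r => if q ∈ K then (if r = (v q).1 then (v q).2 else (w1 q).2) else p2 q r)
      v w1 :=
    { good := s.good, hv := s.hv, hw := hw1
      hK := fun q hq => by rw [hwK q hq]; exact s.hK q hq
      hKc := fun q hq => by rw [hwo q hq]; exact s.hKc q hq
      hpv := fun q => by
        by_cases hq : q ∈ K
        · simp [hq]
        · simp [hq, hp2 q hq]
      hpw := fun q => by
        by_cases hq : q ∈ K
        · have : (w1 q).1 ≠ (v q).1 := by rw [hwK q hq]; exact (s.hK q hq).symm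
          simp [hq, this]
        · have h := hp2 q hq
          rw [s.hKc q hq, ← hwo q hq] at h
          simp [hq, h]
      max := s.max }
  obtain ⟨u, hu, hd, hp, hor, hnot⟩ := s2.A0 hv' hvo hvK hKm hij hik
  have hpat : ∀ q, q ∉ K → p2 q (u q).1 = (u q).2 := fun q hq => by
    have := hp q (by rintro rfl; exact hq hiK)
    simpa [hq] using this
  rcases hor with ej | ek
  · have ek := s2.A1 hv' hvo hvK hKm hij hik hjk hu hd hp ej (fun h => hnot ⟨ej, h⟩)
    exact ⟨u, hu, hd, hpat, Or.inl ⟨ej, ek⟩, s2.one_aux hc hKm hij hu hd hp ej ek⟩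
  · have ej := s2.A1 hv' hvo hvK hKm' hik hij hjk.symm hu hd hp ek (fun h => hnot ⟨h, ek⟩)
    exact ⟨u, hu, hd, hpat, Or.inr ⟨ek, ej⟩, s2.one_aux hc hKm' hik hu hd hp ek ej⟩

lemma AA.nonmix (g : Good V W) {i j k : ι} (hKm : ∀ q, q ∈ K ↔ q = i ∨ q = j ∨ q = k)
    {p2 : ι → R → Bool} {w1 w2 u u' : ι → R × Bool}
    (h : AA V K v i j k p2 w1 u) (h' : AA V K v i j k p2 w2 u')
    (b1 : ∀ q ∈ K, (v q).1 ≠ (w1 q).1) (b2 : ∀ q ∈ K, (v q).1 ≠ (w2 q).1)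
    (t1 : u j = v j ∧ u k = w1 k) (t2 : u' k = v k ∧ u' j = w2 j) : False := by
  have hjK : j ∈ K := (hKm j).2 (by simp)
  have hkK : k ∈ K := (hKm k).2 (by simp)
  have hne : u ≠ u' := by
    rintro rfl
    exact b2 j hjK (by rw [← t1.1, t2.2])
  obtain ⟨q, hq⟩ := g.dV u h.mem u' h'.mem hne
  by_cases hqK : q ∈ K
  · rcases (hKm q).1 hqK with rfl | rfl | rfl
    · rw [eq_of_dic h.dic h'.dic] at hq; exact hq.2 rfl
    · have := hq.1; rw [t1.1, t2.2] at this; exact b2 q hqK this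
    · have := hq.1; rw [t1.2, t2.1] at this; exact b1 q hqK this.symm
  · exact not_dic_of_pat (h.pat q hqK) (h'.pat q hqK) hq

lemma AA.core (g : Good V W) {i j k : ι} (hKm : ∀ q, q ∈ K ↔ q = i ∨ q = j ∨ q = k)
    {p2 : ι → R → Bool} (hp2 : ∀ q, q ∉ K → p2 q (v q).1 = (v q).2) {w1 w2 u u' : ι → R × Bool}
    (h : AA V K v i j k p2 w1 u) (h' : AA V K v i j k p2 w2 u')
    (b1 : ∀ q ∈ K, (v q).1 ≠ (w1 q).1) (b2 : ∀ q ∈ K, (v q).1 ≠ (w2 q).1)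
    (ex1 : ∀ p3 : ι → R → Bool, (∀ q, q ∉ K → p3 q (v q).1 = (v q).2) → ∃ u, AA V K v i j k p3 w1 u)
    (ex2 : ∀ p3 : ι → R → Bool, (∀ q, q ∉ K → p3 q (v q).1 = (v q).2) → ∃ u, AA V K v i j k p3 w2 u)
    (t1 : u j = v j ∧ u k = w1 k) (t2 : u' j = v j ∧ u' k = w2 k)
    {q : ι} (hqK : q ∉ K) (hquu : u q ≠ u' q) (hquv : u q ≠ v q) : False := by
  have hjK : j ∈ K := (hKm j).2 (by simp)
  have hkK : k ∈ K := (hKm k).2 (by simp)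
  have hb : (u q).1 ≠ (v q).1 := fun e => hquv (eq_of_pat (h.pat q hqK) (hp2 q hqK) e)
  set p3 : ι → R → Bool := fun s r => if s = q ∧ r = (u q).1 then !(u q).2 else p2 s r with hp3
  have hp3v : ∀ q, q ∉ K → p3 q (v q).1 = (v q).2 := by
    intro s hs
    by_cases hsq : s = q
    · subst hsq; simp [hp3, hb.symm, hp2 s hs]
    · simp [hp3, hsq, hp2 s hs]
  have hp3ne : ∀ s r, s ≠ q → p3 s r = p2 s r := by intro s r hs; simp [hp3, hs]
  obtain ⟨u2, h2⟩ := ex1 p3 hp3v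
  obtain ⟨u3, h3⟩ := ex2 p3 hp3v
  have hne : u2 ≠ u := by
    rintro rfl
    have := h2.pat q hqK
    simp [hp3] at this
  obtain ⟨s, hs⟩ := g.dV u2 h2.mem u h.mem hne
  have hsq : s = q := by
    by_contra hsq
    by_cases hsK : s ∈ K
    · rcases (hKm s).1 hsK with rfl | rfl | rfl
      · rw [eq_of_dic h.dic h2.dic] at hs; exact hs.2 rfl
      · rcases h2.typ with t | t
        · rw [t.1, t1.1] at hs; exact hs.2 rfl
        · rw [t.2, t1.1] at hs; exact b1 s hsK hs.1.symm
      · rcases h2.typ with t | t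
        · rw [t.2, t1.2] at hs; exact hs.2 rfl
        · rw [t.1, t1.2] at hs; exact b1 s hsK hs.1
    · have := h2.pat s hsK
      rw [hp3ne s _ hsq] at this
      exact not_dic_of_pat this (h.pat s hsK) hs
  subst hsq
  rcases h2.typ with t | t
  · obtain ⟨r, hr, hne2⟩ := g.tV u2 h2.mem u h.mem s hs
    apply hne2
    by_cases hrK : r ∈ K
    · rcases (hKm r).1 hrK with rfl | rfl | rfl
      · exact eq_of_dic h2.dic h.dic
      · rw [t.1, t1.1]
      · rw [t.2, t1.2]
    · have e1 : u r = v r := by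
        by_contra hc
        exact hr (h.one r s hrK hqK hc hquv)
      have e2 : u2 r = v r := by
        by_contra hc
        refine hr (h2.one r s hrK hqK hc ?_)
        intro e
        exact hb (by rw [← hs.1, e])
      rw [e1, e2]
  · rcases h3.typ with t' | t'
    · exact AA.nonmix g hKm h3 h2 b2 b1 t' t
    · have hne3 : u3 ≠ u' := by
        rintro rfl
        exact b2 j hjK (by rw [← t2.1, t'.2])
      obtain ⟨r, hr⟩ := g.dV u3 h3.mem u' h'.mem hne3
      by_cases hrK : r ∈ K
      · rcases (hKm r).1 hrK with rfl | rfl | rfl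
        · rw [eq_of_dic h3.dic h'.dic] at hr; exact hr.2 rfl
        · have := hr.1; rw [t'.2, t2.1] at this; exact b2 r hrK this.symm
        · have := hr.1; rw [t'.1, t2.2] at this; exact b2 r hrK this
      · by_cases hrs : r = s
        · subst hrs
          by_cases hbb : (u' r).1 = (u r).1
          · exact hquu (eq_of_pat (h.pat r hrK) (h'.pat r hrK) hbb.symm)
          · have e := h3.pat r hrK
            have : p3 r (u3 r).1 = p2 r (u3 r).1 := by
              have hx : (u3 r).1 ≠ (u r).1 := by rw [hr.1]; exact hbb
              simp [hp3, hx]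
            rw [this] at e
            exact not_dic_of_pat e (h'.pat r hrK) hr
        · have e := h3.pat r hrK
          rw [hp3ne r _ hrs] at e
          exact not_dic_of_pat e (h'.pat r hrK) hr

lemma AA.core2 (g : Good V W) {i j k : ι} (hKm : ∀ q, q ∈ K ↔ q = i ∨ q = j ∨ q = k)
    {p2 : ι → R → Bool} (hp2 : ∀ q, q ∉ K → p2 q (v q).1 = (v q).2) {w1 w2 u u' : ι → R × Bool}
    (h : AA V K v i j k p2 w1 u) (h' : AA V K v i j k p2 w2 u')
    (b1 : ∀ q ∈ K, (v q).1 ≠ (w1 q).1) (b2 : ∀ q ∈ K, (v q).1 ≠ (w2 q).1)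
    (hww : ∀ q ∈ K, Dic (w1 q) (w2 q))
    (ex1 : ∀ p3 : ι → R → Bool, (∀ q, q ∉ K → p3 q (v q).1 = (v q).2) → ∃ u, AA V K v i j k p3 w1 u)
    (ex2 : ∀ p3 : ι → R → Bool, (∀ q, q ∉ K → p3 q (v q).1 = (v q).2) → ∃ u, AA V K v i j k p3 w2 u)
    (t1 : u j = v j ∧ u k = w1 k) (t2 : u' j = v j ∧ u' k = w2 k) : False := by
  have hkK : k ∈ K := (hKm k).2 (by simp)
  obtain ⟨q, hqk, hq⟩ := g.tV u h.mem u' h'.mem k (by rw [t1.2, t2.2]; exact hww k hkK)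
  have hqK : q ∉ K := by
    intro hqK
    rcases (hKm q).1 hqK with rfl | rfl | rfl
    · exact hq (eq_of_dic h.dic h'.dic)
    · exact hq (by rw [t1.1, t2.1])
    · exact hqk rfl
  by_cases e : u q = v q
  · exact AA.core g hKm hp2 h' h b2 b1 ex2 ex1 t2 t1 hqK hq.symm (fun e' => hq (by rw [e, e']))
  · exact AA.core g hKm hp2 h h' b1 b2 ex1 ex2 t1 t2 hqK hq e

lemma Side.card_ge_four (s : Side V W K p v w) : 4 ≤ K.card := by
  have full : ∀ {V W : Finset (ι → R × Bool)} {v w : ι → R × Bool}, Side V W K p v w → 3 ≤ K.card ∧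
      (K.card = 3 → ∃ v' ∈ V, (∀ q, q ∉ K → v' q = v q) ∧ ∀ q ∈ K, Dic (v' q) (v q)) := by
    intro V W v w s
    obtain ⟨v', hv', hs⟩ := s.exists_v'
    obtain ⟨-, h3⟩ := s.sd_ge hv' s.v_mem hs
    have hsub : sd K v' v ⊆ K := Finset.filter_subset _ _
    refine ⟨h3.trans (Finset.card_le_card hsub), fun hc => ⟨v', XX_sub hv', s.X_off hv', ?_⟩⟩
    intro q hq
    have := Finset.eq_of_subset_of_card_le hsub (by omega)
    rw [← this] at hq
    exact ⟨s.X_base hv' q, (Finset.mem_filter.1 hq).2⟩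
  by_contra hlt
  have h3 := (full s).1
  have hc : K.card = 3 := by omega
  obtain ⟨v', hv', hvo, hvK⟩ := (full s).2 hc
  obtain ⟨w', hw', hwo, hwK⟩ := (full s.symm).2 hc
  obtain ⟨i, j, k, hij, hik, hjk, hKe⟩ := Finset.card_eq_three.1 hc
  have hKm : ∀ q, q ∈ K ↔ q = i ∨ q = j ∨ q = k := by intro q; rw [hKe]; simp
  have hKm' : ∀ q, q ∈ K ↔ q = i ∨ q = k ∨ q = j := by intro q; rw [hKm q]; tauto
  have ex1 : ∀ p3 : ι → R → Bool, (∀ q, q ∉ K → p3 q (v q).1 = (v q).2) →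
      ∃ u, AA V K v i j k p3 w u := fun p3 h =>
    s.exAA hc hv' hvo hvK hKm hij hik hjk p3 h s.hw (fun _ _ => rfl) (fun _ _ => rfl)
  have ex2 : ∀ p3 : ι → R → Bool, (∀ q, q ∉ K → p3 q (v q).1 = (v q).2) →
      ∃ u, AA V K v i j k p3 w' u := fun p3 h =>
    s.exAA hc hv' hvo hvK hKm hij hik hjk p3 h hw' hwo (fun q hq => (hwK q hq).1)
  have b2 : ∀ q ∈ K, (v q).1 ≠ (w' q).1 := fun q hq => by rw [(hwK q hq).1]; exact s.hK q hq
  have hp : ∀ q, q ∉ K → p q (v q).1 = (v q).2 := fun q _ => s.hpv q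
  have hww : ∀ q ∈ K, Dic (w q) (w' q) := fun q hq => (hwK q hq).symm
  obtain ⟨u, hu⟩ := ex1 p hp
  obtain ⟨u', hu'⟩ := ex2 p hp
  rcases hu.typ with t | t <;> rcases hu'.typ with t' | t'
  · exact AA.core2 s.good hKm hp hu hu' s.hK b2 hww ex1 ex2 t t'
  · exact AA.nonmix s.good hKm hu hu' s.hK b2 t t'
  · exact AA.nonmix s.good hKm hu' hu b2 s.hK t' t
  · exact AA.core2 s.good hKm' hp hu.swap hu'.swap s.hK b2 hww
      (fun p3 h => (ex1 p3 h).imp fun _ h => h.swap) (fun p3 h => (ex2 p3 h).imp fun _ h => h.swap) t t'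

end Abstract6

set_option linter.unusedSectionVars false

section Abstract7
open Classical Finset
variable {ι R : Type} [Fintype ι]
variable {V W : Finset (ι → R × Bool)} {K : Finset ι} {p : ι → R → Bool} {v w : ι → R × Bool}

lemma Side.sideThm (s : Side V W K p v w) : 12 ≤ V.card ∨ 12 ≤ (ball V W K v 1).card ∨
    ((XX V K p v).card = 2 ∧ 12 ≤ (ball V W K v 2).card) ∨
    (5 ≤ K.card ∧ 12 ≤ (ball V W K v 2).card) := by
  have h4 := s.card_ge_four
  have hV := s.V_ge
  have hX := XX_card (V := V) (K := K) (p := p) (v := v)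
  have hpm := s.Xpm
  have hpos := s.Xp_pos
  by_cases h12 : 12 ≤ V.card
  · exact Or.inl h12
  have h3 : (Xp V K p v).card = 1 ∨ (Xp V K p v).card = 2 ∨
    ((Xp V K p v).card = 3 ∧ K.card ≤ 5) := by omega
  rcases h3 with h | h | ⟨h, hk⟩
  · have hX2 : (XX V K p v).card = 2 := by omega
    rcases s.h1 hX2 with h | h
    · exact Or.inr (Or.inl h)
    · exact Or.inr (Or.inr (Or.inl ⟨hX2, h⟩))
  · rcases s.h2 h with h | h
    · exact Or.inr (Or.inl h)
    · exact Or.inr (Or.inr (Or.inr ⟨h.2, h.1⟩))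
  · exact Or.inr (Or.inl (s.h3 h hk))

lemma Side.df_union (s : Side V W K p v w) (u : ι → R × Bool) :
    K.card ≤ (df K v u).card + (df K w u).card := by
  refine le_trans (Finset.card_le_card ?_) (Finset.card_union_le _ _)
  intro i hi
  simp only [Finset.mem_union, mem_df, hi, true_and]
  by_contra h
  push Not at h
  exact s.hK i hi (h.1.symm.trans h.2)

lemma Side.ball_add (s : Side V W K p v w) {r t : ℕ} (h : r + t < K.card) :
    (ball V W K v r).card + (ball W V K w t).card ≤ V.card + W.card := by
  have hd : Disjoint (ball V W K v r) (ball W V K w t) := by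
    rw [Finset.disjoint_left]
    intro u hu hu'
    simp only [ball, Finset.mem_filter] at hu hu'
    have := s.df_union u
    omega
  rw [← Finset.card_union_of_disjoint hd]
  refine le_trans (Finset.card_le_card ?_) (Finset.card_union_le V W)
  apply Finset.union_subset (Finset.filter_subset _ _)
  rw [Finset.union_comm]
  exact Finset.filter_subset _ _

lemma ball_mono {r t : ℕ} (h : r ≤ t) : (ball V W K v r).card ≤ (ball V W K v t).card := by
  apply Finset.card_le_card
  intro u hu
  simp only [ball, Finset.mem_filter] at hu ⊢
  exact ⟨hu.1, by omega⟩

lemma Side.final4 (s : Side V W K p v w) (hk : K.card = 4) (h1 : (XX V K p v).card = 2)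
    (h2 : (XX W K p w).card = 2) : 24 ≤ V.card + W.card := by
  obtain ⟨v', hne, hX, hs⟩ := s.X_two h1
  obtain ⟨w', hne', hY, hs'⟩ := s.symm.X_two h2
  have hD : ∀ {V W : Finset (ι → R × Bool)} {v w v' : ι → R × Bool}, Side V W K p v w →
      XX V K p v = {v, v'} → sgn K v' = - sgn K v → (sd K v v').card = 3 := by
    intro V W v w v' s hX hs
    have hv' : v' ∈ XX V K p v := by rw [hX]; simp
    obtain ⟨hodd, h3⟩ := s.sd_ge s.v_mem hv' (by
      rw [hs]; rcases sgn_cases K v with h | h <;> rw [h] <;> decide)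
    have : (sd K v v').card ≤ K.card := Finset.card_le_card (Finset.filter_subset _ _)
    obtain ⟨k, hk⟩ := hodd
    omega
  have d1 := hD s hX hs
  have d2 := hD s.symm hY hs'
  have hI : 2 ≤ (sd K v v' ∩ sd K w w').card := by
    have := Finset.card_union_add_card_inter (sd K v v') (sd K w w')
    have h3 : (sd K v v' ∪ sd K w w').card ≤ K.card :=
      Finset.card_le_card (Finset.union_subset (Finset.filter_subset _ _) (Finset.filter_subset _ _))
    omega
  obtain ⟨i, hi, j, hj, hij⟩ := Finset.one_lt_card.1 hI
  rw [Finset.mem_inter] at hi hj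
  have c1 := s.claimD hne hX hY hi.1 hi.2 (by omega)
  have c2 := s.claimD hne hX hY hj.1 hj.2 (by omega)
  have c3 := s.symm.claimD hne' hY hX hi.2 hi.1 (by omega)
  have c4 := s.symm.claimD hne' hY hX hj.2 hj.1 (by omega)
  have lines : ∀ {V W : Finset (ι → R × Bool)} {v w v' : ι → R × Bool}, Side V W K p v w → v' ≠ v →
      XX V K p v = {v, v'} → sgn K v' = - sgn K v → i ∈ sd K v v' → j ∈ sd K v v' →
      (sd K v v').card = 3 →
      2 + (GG V W K v {i}).card + (GG V W K v {j}).card + 2 ≤ (ball V W K v 1).card ∧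
      2 ≤ (GG V W K v {i}).card ∧ 2 ≤ (GG V W K v {j}).card := by
    intro V W v w v' s hne hX hs hi hj h3
    have hb := s.ball1_ge (sd K v v')
    refine ⟨?_, (s.line_two hne hX hs hi).1, (s.line_two hne hX hs hj).1⟩
    obtain ⟨k, hk⟩ : ∃ k, ((sd K v v').erase i).erase j = {k} := by
      apply Finset.card_eq_one.1
      rw [Finset.card_erase_of_mem (by simp [hj, hij.symm]), Finset.card_erase_of_mem hi, h3]
    have hkm : k ∈ ((sd K v v').erase i).erase j := by rw [hk]; simp
    have hk2 := (s.line_two hne hX hs (Finset.mem_of_mem_erase (Finset.mem_of_mem_erase hkm))).1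
    rw [← Finset.add_sum_erase _ _ hi, ← Finset.add_sum_erase _ _ (show j ∈ (sd K v v').erase i by
      simp [hj, hij.symm]), hk, Finset.sum_singleton, hX, Finset.card_pair hne.symm] at hb
    omega
  obtain ⟨l1, l2, l3⟩ := lines s hne hX hs hi.1 hj.1 d1
  obtain ⟨m1, m2, m3⟩ := lines s.symm hne' hY hs' hi.2 hj.2 d2
  have hPI : ∀ a ∈ K, (PI V W K v a).card + (PI W V K w a).card ≤ (R2 V W K v ∪ R2 W V K w).card := by
    intro a ha
    have hd : Disjoint (PI V W K v a) (PI W V K w a) := by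
      rw [Finset.disjoint_left]
      intro u hu hu'
      simp only [PI, Finset.mem_filter] at hu hu'
      have hsub : K ⊆ df K v u ∪ df K w u := by
        intro i hi
        simp only [Finset.mem_union, mem_df, hi, true_and]
        by_contra h
        push Not at h
        exact s.hK i hi (h.1.symm.trans h.2)
      have h5 := Finset.card_le_card hsub
      have h6 := Finset.card_union_add_card_inter (df K v u) (df K w u)
      have h7 : 0 < (df K v u ∩ df K w u).card :=
        Finset.card_pos.2 ⟨a, Finset.mem_inter.2 ⟨hu.2.2, hu'.2.2⟩⟩
      omega
    rw [← Finset.card_union_of_disjoint hd]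
    apply Finset.card_le_card
    apply Finset.union_subset_union
    · intro u hu
      simp only [PI, R2, Finset.mem_filter] at hu ⊢; exact ⟨hu.1, hu.2.1⟩
    · intro u hu
      simp only [PI, R2, Finset.mem_filter] at hu ⊢; exact ⟨hu.1, hu.2.1⟩
  have pi := hPI i (Finset.mem_filter.1 hi.1).1
  have pj := hPI j (Finset.mem_filter.1 hj.1).1
  have hd1 : Disjoint (ball V W K v 1) (ball W V K w 1) := by
    rw [Finset.disjoint_left]
    intro u hu hu'
    simp only [ball, Finset.mem_filter] at hu hu'
    have := s.df_union u
    omega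
  have hd2 : Disjoint (ball V W K v 1 ∪ ball W V K w 1) (R2 V W K v ∪ R2 W V K w) := by
    rw [Finset.disjoint_left]
    intro u hu hu'
    rw [Finset.mem_union] at hu hu'
    simp only [ball, R2, Finset.mem_filter] at hu hu'
    have := s.df_union u
    omega
  have htot : (ball V W K v 1 ∪ ball W V K w 1) ∪ (R2 V W K v ∪ R2 W V K w) ⊆ V ∪ W := by
    have e : W ∪ V = V ∪ W := Finset.union_comm _ _
    apply Finset.union_subset <;> apply Finset.union_subset
    · exact Finset.filter_subset _ _
    · rw [← e]; exact Finset.filter_subset _ _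
    · exact Finset.filter_subset _ _
    · rw [← e]; exact Finset.filter_subset _ _
  have h8 := (Finset.card_le_card htot).trans (Finset.card_union_le V W)
  rw [Finset.card_union_of_disjoint hd2, Finset.card_union_of_disjoint hd1] at h8
  omega

lemma Side.final (s : Side V W K p v w) : 24 ≤ V.card + W.card := by
  have hVW := s.good.card_eq
  have h4 := s.card_ge_four
  have m1 := ball_mono (V := V) (W := W) (K := K) (v := v) (show 1 ≤ 2 by omega)
  have m2 := ball_mono (V := W) (W := V) (K := K) (v := w) (show 1 ≤ 2 by omega)
  by_cases h5 : 5 ≤ K.card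
  · have hb := s.ball_add (r := 2) (t := 2) (by omega)
    rcases s.sideThm with h | h | h | h <;> rcases s.symm.sideThm with h' | h' | h' | h' <;> omega
  · have hb1 := s.ball_add (r := 1) (t := 1) (by omega)
    have hb2 := s.ball_add (r := 1) (t := 2) (by omega)
    have hb3 := s.ball_add (r := 2) (t := 1) (by omega)
    rcases s.sideThm with h | h | h | h <;> rcases s.symm.sideThm with h' | h' | h' | h'
    case inr.inr.inl.inr.inr.inl => exact s.final4 (by omega) h.1 h'.1
    all_goals omega

theorem key_lemma {V W : Finset (ι → R × Bool)} (g : Good V W) (hV : V.Nonempty) :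
    24 ≤ V.card + W.card := by
  obtain ⟨v0, hv0⟩ := hV
  obtain ⟨w0, hw0, hp0⟩ := g.symm.exists_mem (fun i _ => (v0 i).2) v0 hv0 (fun i => rfl)
  set Pr := ((V ×ˢ W).filter fun x => ∀ i, ¬ Dic (x.1 i) (x.2 i)) with hPr
  have hne : Pr.Nonempty := ⟨(v0, w0), by
    rw [hPr, Finset.mem_filter, Finset.mem_product]
    exact ⟨⟨hv0, hw0⟩, fun i h => h.2 (hp0 i)⟩⟩
  obtain ⟨⟨v, w⟩, hm, hmax⟩ := Finset.exists_max_image Pr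
    (fun x => ({i | x.1 i ≠ x.2 i} : Finset ι).card) hne
  rw [hPr, Finset.mem_filter, Finset.mem_product] at hm
  obtain ⟨⟨hv, hw⟩, hd⟩ := hm
  simp only at hv hw hd
  have hb : ∀ i, v i ≠ w i → (v i).1 ≠ (w i).1 := by
    intro i hi h
    apply hd i
    exact ⟨h, fun h2 => hi (Prod.ext h h2)⟩
  have s : Side V W ({i | v i ≠ w i} : Finset ι)
      (fun i r => if r = (v i).1 then (v i).2 else (w i).2) v w :=
    { good := g, hv := hv, hw := hw
      hK := fun i hi => hb i (by simpa using hi)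
      hKc := fun i hi => by simpa using hi
      hpv := fun i => by simp
      hpw := fun i => by
        by_cases h : v i = w i
        · simp [h]
        · simp [(hb i h).symm]
      max := fun x hx y hy h => hmax (x, y) (by
        rw [hPr, Finset.mem_filter, Finset.mem_product]; exact ⟨⟨hx, hy⟩, h⟩) }
  exact s.final

end Abstract7

section Reduction
open Classical Finset

variable {d : ℕ}

/-- one-coordinate linear algebra -/
lemma thresh {α : Type} (C : Finset α) (b : α → ℝ × Bool) (G : α → ℤ) (x : ℝ)
    (hb : ∀ t ∈ C, x - 1 < (b t).1 ∧ (b t).1 < x)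
    (hF : ∀ s : ℝ, 0 ≤ s → s < 1 → ∑ t ∈ C, ev (fun r => decide (x + s < r + 1)) (b t) * G t = 1)
    (q : ℝ → Bool) : ∑ t ∈ C, ev q (b t) * G t = 1 := by
  have hAB : ∀ r ∈ C.image (fun t => (b t).1), ∑ t ∈ C with (b t).1 = r, ev (fun _ => true) (b t) * G t =
      ∑ t ∈ C with (b t).1 = r, ev (fun _ => false) (b t) * G t := by
    intro r hr
    obtain ⟨t0, ht0, hr0⟩ := Finset.mem_image.1 hr
    have hr1 : x - 1 < r ∧ r < x := by rw [← hr0]; exact hb t0 ht0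
    set S := insert (x - 1) ((C.image (fun t => (b t).1)).filter (· < r)) with hS
    have hSne : S.Nonempty := ⟨x - 1, by simp [hS]⟩
    set m := S.max' hSne with hm
    have hmS : m ∈ S := S.max'_mem hSne
    have hmr : m < r := by
      rw [hS, Finset.mem_insert, Finset.mem_filter] at hmS
      rcases hmS with h | h
      · rw [h]; exact hr1.1
      · exact h.2
    have hmx : x - 1 ≤ m := S.le_max' _ (by simp [hS])
    have hmle : ∀ t ∈ C, (b t).1 < r → (b t).1 ≤ m := fun t ht h =>
      S.le_max' _ (by
        rw [hS, Finset.mem_insert, Finset.mem_filter]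
        exact Or.inr ⟨Finset.mem_image_of_mem _ ht, h⟩)
    have f1 := hF (m + 1 - x) (by linarith) (by linarith)
    have f2 := hF (r + 1 - x) (by linarith) (by linarith)
    have f3 := f1.trans f2.symm
    rw [← sub_eq_zero, ← Finset.sum_sub_distrib] at f3
    have f4 : ∑ t ∈ C with (b t).1 = r, (ev (fun _ => true) (b t) * G t - ev (fun _ => false) (b t) * G t) = 0 := by
      rw [← f3, Finset.sum_filter]
      refine Finset.sum_congr rfl fun t ht => ?_
      by_cases h : (b t).1 = r
      · rw [if_pos h]
        have e1 : decide (x + (m + 1 - x) < (b t).1 + 1) = true := by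
          rw [h]; simp; linarith
        have e2 : decide (x + (r + 1 - x) < (b t).1 + 1) = false := by
          rw [h]; simp
        simp only [ev, e1, e2]
      · rw [if_neg h]
        have e : decide (x + (m + 1 - x) < (b t).1 + 1) = decide (x + (r + 1 - x) < (b t).1 + 1) := by
          rw [decide_eq_decide]
          rcases lt_or_gt_of_ne h with h' | h'
          · have := hmle t ht h'
            constructor <;> intro h3 <;> linarith
          · constructor <;> intro h3 <;> linarith
        simp only [ev, e, sub_self]
    rw [Finset.sum_sub_distrib, sub_eq_zero] at f4
    exact f4
  have expand : ∀ q : ℝ → Bool, ∑ t ∈ C, ev q (b t) * G t =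
      ∑ r ∈ C.image (fun t => (b t).1), ∑ t ∈ C with (b t).1 = r, ev (fun _ => true) (b t) * G t := by
    intro q
    rw [← Finset.sum_fiberwise_of_maps_to (g := fun t => (b t).1) (t := C.image (fun t => (b t).1))
      (fun t ht => Finset.mem_image_of_mem _ ht)]
    refine Finset.sum_congr rfl fun r hr => ?_
    cases hq : q r
    · rw [hAB r hr]
      refine Finset.sum_congr rfl fun t ht => ?_
      rw [Finset.mem_filter] at ht
      simp [ev, ht.2, hq]
    · refine Finset.sum_congr rfl fun t ht => ?_
      rw [Finset.mem_filter] at ht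
      simp [ev, ht.2, hq]
  rw [expand q, ← expand (fun r => decide (x + 0 < r + 1))]
  exact hF 0 le_rfl one_pos

/-- the members of `T` whose cubes meet the cube of `x` -/
def TX (T : Set (Fin d → ℝ)) (x : Fin d → ℝ) : Set (Fin d → ℝ) :=
  {t ∈ T | ∀ j, x j - 1 < t j ∧ t j < x j + 1}

lemma meet_iff (t x : Fin d → ℝ) :
    (cube t ∩ cube x).Nonempty ↔ ∀ j, x j - 1 < t j ∧ t j < x j + 1 := by
  constructor
  · rintro ⟨y, h1, h2⟩ j
    have a := h1 j
    have b := h2 j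
    constructor <;> linarith
  · intro h
    refine ⟨fun j => max (t j) (x j), fun j => ⟨le_max_left _ _, ?_⟩, fun j => ⟨le_max_right _ _, ?_⟩⟩
    · have := h j; apply max_lt <;> linarith
    · have := h j; apply max_lt <;> linarith

lemma eq_of_meet {T : Set (Fin d → ℝ)} (hT : IsCubeTiling T) {t s : Fin d → ℝ} (ht : t ∈ T) (hs : s ∈ T)
    (h : (cube t ∩ cube s).Nonempty) : t = s := by
  by_contra hne
  exact Set.not_disjoint_iff_nonempty_inter.2 h (hT.2 ht hs hne)

lemma TX_inj {T : Set (Fin d → ℝ)} (hT : IsCubeTiling T) (x : Fin d → ℝ) :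
    Set.InjOn (fun (t : Fin d → ℝ) (j : Fin d) => decide (t j ≤ x j)) (TX T x) := by
  intro t ht s hs h
  apply eq_of_meet hT ht.1 hs.1
  rw [meet_iff]
  intro j
  have e : decide (t j ≤ x j) = decide (s j ≤ x j) := congrFun h j
  rw [decide_eq_decide] at e
  have a := ht.2 j
  have b := hs.2 j
  by_cases c : t j ≤ x j
  · have := e.1 c; constructor <;> linarith
  · have c' : ¬ s j ≤ x j := fun h => c (e.2 h)
    push Not at c c'
    constructor <;> linarith

lemma TX_finite {T : Set (Fin d → ℝ)} (hT : IsCubeTiling T) (x : Fin d → ℝ) : (TX T x).Finite :=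
  Set.Finite.of_injOn (t := Set.univ) (fun _ _ => Set.mem_univ _) (TX_inj hT x) Set.finite_univ

lemma TX_card {T : Set (Fin d → ℝ)} (hT : IsCubeTiling T) (x : Fin d → ℝ) :
    (TX_finite hT x).toFinset.card ≤ 2 ^ d := by
  have h := Finset.card_le_card_of_injOn (s := (TX_finite hT x).toFinset)
    (t := (Finset.univ : Finset (Fin d → Bool)))
    (fun (t : Fin d → ℝ) (j : Fin d) => decide (t j ≤ x j)) (fun _ _ => Finset.mem_univ _)
    (by simpa using TX_inj hT x)
  simpa using h

/-- the word of `t` -/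
noncomputable def wd (x t : Fin d → ℝ) (j : Fin d) : ℝ × Bool :=
  if t j < x j then (t j, true) else (t j - 1, false)

lemma wd_coord {x t s : Fin d → ℝ} {j : Fin d} (h : wd x t j = wd x s j) : t j = s j := by
  unfold wd at h
  split_ifs at h <;> simp at h <;> linarith

lemma wd_dic {x t s : Fin d → ℝ} {j : Fin d} (h : Dic (wd x t j) (wd x s j)) : |t j - s j| = 1 := by
  unfold wd Dic at h
  split_ifs at h <;> simp at h
  · rw [h]; simp
  · rw [← h]; simp

lemma total_aux {T : Set (Fin d → ℝ)} (hT : IsCubeTiling T) {x : Fin d → ℝ}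
    (hx : ∀ t ∈ T, ∀ j, t j ≠ x j) (S : Finset (Fin d)) :
    ∀ p : Fin d → ℝ → Bool, (∀ j, j ∉ S → ∃ s : ℝ, 0 ≤ s ∧ s < 1 ∧
      p j = fun r => decide (x j + s < r + 1)) →
    ∑ t ∈ (TX_finite hT x).toFinset, ∏ j, ev (p j) (wd x t j) = 1 := by
  have hbase : ∀ t ∈ (TX_finite hT x).toFinset, ∀ j, x j - 1 < (wd x t j).1 ∧ (wd x t j).1 < x j := by
    intro t ht j
    rw [Set.Finite.mem_toFinset] at ht
    have a := ht.2 j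
    have b := hx t ht.1 j
    unfold wd
    split_ifs with h
    · exact ⟨a.1, h⟩
    · have : x j < t j := lt_of_le_of_ne (not_lt.1 h) b.symm
      constructor
      · show x j - 1 < t j - 1; linarith
      · show t j - 1 < x j; linarith
  induction S using Finset.induction_on with
  | empty =>
    intro p hp
    choose s hs0 hs1 hps using fun j => hp j (by simp)
    have hy : (fun j => x j + s j) ∈ ⋃ t ∈ T, cube t := by rw [hT.1]; trivial
    simp only [Set.mem_iUnion] at hy
    obtain ⟨t0, ht0, hyt⟩ := hy
    have ht0x : t0 ∈ TX T x := by
      refine ⟨ht0, ?_⟩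
      rw [← meet_iff]
      exact ⟨_, hyt, fun j => ⟨by simp [hs0 j], by simp [hs1 j]⟩⟩
    have hev : ∀ t ∈ (TX_finite hT x).toFinset, ∀ j, ev (p j) (wd x t j) =
        if (t j ≤ x j + s j ∧ x j + s j < t j + 1) then 1 else 0 := by
      intro t ht j
      rw [Set.Finite.mem_toFinset] at ht
      have a := ht.2 j
      have b := hx t ht.1 j
      have := hs0 j
      have := hs1 j
      rw [hps j]
      unfold wd ev
      by_cases h : t j < x j
      · rw [if_pos h]
        simp only [decide_eq_true_eq]
        congr 1
        rw [eq_iff_iff]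
        constructor
        · intro h'; exact ⟨by linarith, h'⟩
        · exact fun h' => h'.2
      · rw [if_neg h]
        simp only [decide_eq_false_iff_not]
        congr 1
        rw [eq_iff_iff]
        push Not at h ⊢
        constructor
        · intro h'; exact ⟨by linarith, by linarith⟩
        · intro h'; linarith
    rw [Finset.sum_eq_single t0]
    · apply Finset.prod_eq_one
      intro j _
      rw [hev t0 (by rw [Set.Finite.mem_toFinset]; exact ht0x) j, if_pos (hyt j)]
    · intro t ht hne
      by_contra h0
      apply hne
      have ht' := ht
      rw [Set.Finite.mem_toFinset] at ht'
      apply eq_of_meet hT ht'.1 ht0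
      refine ⟨_, fun j => ?_, hyt⟩
      have h1 := Finset.prod_ne_zero_iff.1 h0 j (Finset.mem_univ j)
      rw [hev t ht j] at h1
      by_contra h2
      exact h1 (if_neg h2)
    · intro h; exact absurd (by rw [Set.Finite.mem_toFinset]; exact ht0x) h
  | insert j S hj ih =>
    intro p hp
    have hsplit : ∀ (q : ℝ → Bool), ∑ t ∈ (TX_finite hT x).toFinset, ev q (wd x t j) *
        (∏ k ∈ univ.erase j, ev (p k) (wd x t k)) =
        ∑ t ∈ (TX_finite hT x).toFinset, ∏ k, ev (Function.update p j q k) (wd x t k) := by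
      intro q
      refine Finset.sum_congr rfl fun t _ => ?_
      rw [← Finset.mul_prod_erase univ _ (Finset.mem_univ j), Function.update_self]
      congr 1
      refine Finset.prod_congr rfl fun k hk => ?_
      rw [Function.update_of_ne (Finset.ne_of_mem_erase hk)]
    have := thresh (TX_finite hT x).toFinset (fun t => wd x t j)
      (fun t => ∏ k ∈ univ.erase j, ev (p k) (wd x t k)) (x j) (fun t ht => hbase t ht j)
      (by
        intro s h0 h1
        rw [hsplit]
        apply ih
        intro k hk
        by_cases hkj : k = j
        · subst hkj
          exact ⟨s, h0, h1, by rw [Function.update_self]⟩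
        · rw [Function.update_of_ne hkj]
          exact hp k (by simp [hkj, hk]))
      (p j)
    rw [hsplit, Function.update_eq_self] at this
    exact this

lemma total {T : Set (Fin d → ℝ)} (hT : IsCubeTiling T) {x : Fin d → ℝ}
    (hx : ∀ t ∈ T, ∀ j, t j ≠ x j) (p : Fin d → ℝ → Bool) :
    ∑ t ∈ (TX_finite hT x).toFinset, ∏ j, ev (p j) (wd x t j) = 1 :=
  total_aux hT hx univ p (fun j hj => absurd (Finset.mem_univ j) hj)

lemma ev_nonneg {R : Type} (q : R → Bool) (a : R × Bool) : 0 ≤ ev q a := by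
  unfold ev; split_ifs <;> simp

lemma exists_dic {T : Set (Fin d → ℝ)} (hT : IsCubeTiling T) {x : Fin d → ℝ}
    (hx : ∀ t ∈ T, ∀ j, t j ≠ x j) {t s : Fin d → ℝ} (ht : t ∈ (TX_finite hT x).toFinset)
    (hs : s ∈ (TX_finite hT x).toFinset) (hne : t ≠ s) : ∃ j, Dic (wd x t j) (wd x s j) := by
  by_contra hcon
  push Not at hcon
  have h := total hT hx (fun j r => if r = (wd x t j).1 then (wd x t j).2 else (wd x s j).2)
  have h1 : ∏ j, ev (fun r => if r = (wd x t j).1 then (wd x t j).2 else (wd x s j).2) (wd x t j) = 1 :=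
    Finset.prod_eq_one fun j _ => by simp [ev]
  have h2 : ∏ j, ev (fun r => if r = (wd x t j).1 then (wd x t j).2 else (wd x s j).2) (wd x s j) = 1 := by
    refine Finset.prod_eq_one fun j _ => ?_
    by_cases e : (wd x s j).1 = (wd x t j).1
    · have : (wd x t j).2 = (wd x s j).2 := by
        by_contra e2
        exact hcon j ⟨e.symm, e2⟩
      simp [ev, e, this]
    · simp [ev, e]
  have h3 : ∑ u ∈ ({t, s} : Finset (Fin d → ℝ)),
      ∏ j, ev (fun r => if r = (wd x t j).1 then (wd x t j).2 else (wd x s j).2) (wd x u j) ≤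
      ∑ u ∈ (TX_finite hT x).toFinset,
      ∏ j, ev (fun r => if r = (wd x t j).1 then (wd x t j).2 else (wd x s j).2) (wd x u j) := by
    apply Finset.sum_le_sum_of_subset_of_nonneg
    · intro u hu
      simp only [Finset.mem_insert, Finset.mem_singleton] at hu
      rcases hu with rfl | rfl <;> assumption
    · intro u _ _
      exact Finset.prod_nonneg fun j _ => ev_nonneg _ _
  rw [Finset.sum_pair hne, h1, h2, h] at h3
  omega

lemma fiber_card {T : Set (Fin d → ℝ)} (hT : IsCubeTiling T)
    (hno : ∀ t ∈ T, ∀ s ∈ T, ¬ IsTwinPair t s) {x : Fin d → ℝ}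
    (hx : ∀ t ∈ T, ∀ j, t j ≠ x j) (i : Fin d) {r : ℝ} {t0 : Fin d → ℝ}
    (ht0 : t0 ∈ (TX_finite hT x).toFinset) (hr : wd x t0 i = (r, true)) :
    24 ≤ ({t ∈ (TX_finite hT x).toFinset | (wd x t i).1 = r} : Finset _).card := by
  set C := (TX_finite hT x).toFinset with hC
  have hCT : ∀ t ∈ C, t ∈ T := fun t ht => by
    rw [hC, Set.Finite.mem_toFinset] at ht; exact ht.1
  set F : (Fin d → ℝ) → Fin d → ℝ × Bool := fun t => Function.update (wd x t) i (r, true) with hF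
  have hFi : ∀ t, F t i = (r, true) := fun t => by simp [hF]
  have hFne : ∀ t j, j ≠ i → F t j = wd x t j := fun t j hj => by simp [hF, hj]
  have hdic : ∀ b, ∀ t ∈ C, ∀ s ∈ C, wd x t i = (r, b) → wd x s i = (r, b) → t ≠ s →
      ∃ j, Dic (F t j) (F s j) := by
    intro b t ht s hs e1 e2 hne
    obtain ⟨j, hj⟩ := exists_dic hT hx ht hs hne
    have hji : j ≠ i := by rintro rfl; rw [e1, e2] at hj; exact hj.2 rfl
    exact ⟨j, by rw [hFne t j hji, hFne s j hji]; exact hj⟩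
  have htw : ∀ b, ∀ t ∈ C, ∀ s ∈ C, wd x t i = (r, b) → wd x s i = (r, b) →
      ∀ j, Dic (F t j) (F s j) → ∃ k, k ≠ j ∧ F t k ≠ F s k := by
    intro b t ht s hs e1 e2 j hj
    by_contra hcon
    push Not at hcon
    have hji : j ≠ i := by rintro rfl; rw [hFi, hFi] at hj; exact hj.2 rfl
    rw [hFne t j hji, hFne s j hji] at hj
    refine hno t (hCT t ht) s (hCT s hs) ⟨j, wd_dic hj, fun k hk => ?_⟩
    by_cases hki : k = i
    · subst hki; exact wd_coord (e1.trans e2.symm)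
    · have := hcon k hk
      rw [hFne t k hki, hFne s k hki] at this
      exact wd_coord this
  have hinj : ∀ b, Set.InjOn F {t | t ∈ C ∧ wd x t i = (r, b)} := by
    intro b t ht s hs h
    by_contra hne
    obtain ⟨j, hj⟩ := hdic b t ht.1 s hs.1 ht.2 hs.2 hne
    rw [h] at hj; exact hj.2 rfl
  set A := fun b => ({t ∈ C | wd x t i = (r, b)} : Finset (Fin d → ℝ)) with hA
  have hinj' : ∀ b, Set.InjOn F (A b : Set (Fin d → ℝ)) := by
    intro b t ht s hs h
    simp only [hA, Finset.coe_filter] at ht hs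
    exact hinj b ht hs h
  have hg : Good ((A true).image F) ((A false).image F) := by
    refine ⟨?_, ?_, ?_, ?_, ?_, ?_⟩
    · intro u hu v hv hne
      simp only [hA, Finset.mem_image, Finset.mem_filter] at hu hv
      obtain ⟨t, ht, rfl⟩ := hu
      obtain ⟨s, hs, rfl⟩ := hv
      exact hdic true t ht.1 s hs.1 ht.2 hs.2 (fun h => hne (by rw [h]))
    · intro u hu v hv hne
      simp only [hA, Finset.mem_image, Finset.mem_filter] at hu hv
      obtain ⟨t, ht, rfl⟩ := hu
      obtain ⟨s, hs, rfl⟩ := hv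
      exact hdic false t ht.1 s hs.1 ht.2 hs.2 (fun h => hne (by rw [h]))
    · intro u hu v hv
      simp only [hA, Finset.mem_image, Finset.mem_filter] at hu hv
      obtain ⟨t, ht, rfl⟩ := hu
      obtain ⟨s, hs, rfl⟩ := hv
      exact htw true t ht.1 s hs.1 ht.2 hs.2
    · intro u hu v hv
      simp only [hA, Finset.mem_image, Finset.mem_filter] at hu hv
      obtain ⟨t, ht, rfl⟩ := hu
      obtain ⟨s, hs, rfl⟩ := hv
      exact htw false t ht.1 s hs.1 ht.2 hs.2
    · intro u hu hv
      simp only [hA, Finset.mem_image, Finset.mem_filter] at hu hv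
      obtain ⟨t, ht, rfl⟩ := hu
      obtain ⟨s, hs, hst⟩ := hv
      refine hno t (hCT t ht.1) s (hCT s hs.1) ⟨i, wd_dic (x := x) ?_, fun k hk => ?_⟩
      · rw [ht.2, hs.2]; exact ⟨rfl, by simp⟩
      · have := congrFun hst k
        rw [hFne t k hk, hFne s k hk] at this
        exact wd_coord this.symm
    · intro p
      rw [Finset.sum_image (hinj' true), Finset.sum_image (hinj' false)]
      have hsp : ∀ t, ∏ j, ev (p j) (F t j) =
          ev (p i) (r, true) * ∏ j ∈ univ.erase i, ev (p j) (wd x t j) := by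
        intro t
        rw [← Finset.mul_prod_erase univ _ (Finset.mem_univ i), hFi]
        congr 1
        exact Finset.prod_congr rfl fun k hk => by rw [hFne t k (Finset.ne_of_mem_erase hk)]
      simp_rw [hsp]
      rw [← Finset.mul_sum, ← Finset.mul_sum]
      congr 1
      have e1 := total hT hx (Function.update p i (fun _ => true))
      have e2 := total hT hx (Function.update p i (fun r' => if r' = r then false else true))
      have hs2 : ∀ q t, ∏ k, ev (Function.update p i q k) (wd x t k) =
          ev q (wd x t i) * ∏ j ∈ univ.erase i, ev (p j) (wd x t j) := by
        intro q t
        rw [← Finset.mul_prod_erase univ _ (Finset.mem_univ i), Function.update_self]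
        congr 1
        exact Finset.prod_congr rfl fun k hk => by rw [Function.update_of_ne (Finset.ne_of_mem_erase hk)]
      simp_rw [hs2] at e1 e2
      have e3 := e1.trans e2.symm
      rw [← sub_eq_zero, ← Finset.sum_sub_distrib] at e3
      rw [← sub_eq_zero, ← e3]
      simp only [hA]
      rw [Finset.sum_filter, Finset.sum_filter, ← Finset.sum_sub_distrib]
      refine Finset.sum_congr rfl fun t _ => ?_
      rcases hw : wd x t i with ⟨r', b⟩
      by_cases hrr : r' = r <;> cases b <;> simp [ev, hrr]
  have hk := key_lemma hg ⟨F t0, Finset.mem_image_of_mem _ (by simp [hA, ht0, hr])⟩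
  rw [Finset.card_image_of_injOn (hinj' true), Finset.card_image_of_injOn (hinj' false)] at hk
  have hd : Disjoint (A true) (A false) := by
    rw [Finset.disjoint_left]
    intro t h1 h2
    simp only [hA, Finset.mem_filter] at h1 h2
    have := h1.2.symm.trans h2.2
    simp at this
  rw [← Finset.card_union_of_disjoint hd] at hk
  refine hk.trans (Finset.card_le_card ?_)
  intro t ht
  rw [Finset.mem_union] at ht
  simp only [hA, Finset.mem_filter] at ht ⊢
  rcases ht with h | h
  · exact ⟨h.1, by rw [h.2]⟩
  · exact ⟨h.1, by rw [h.2]⟩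

lemma L_sub_image {T : Set (Fin d → ℝ)} (x : Fin d → ℝ) (i : Fin d) :
    L T x i ⊆ (fun t => t i) '' TX T x := by
  rintro r ⟨t, ht, rfl, h, _⟩
  exact ⟨t, ⟨ht, (meet_iff t x).1 h⟩, rfl⟩

lemma L_finite {T : Set (Fin d → ℝ)} (hT : IsCubeTiling T) (x : Fin d → ℝ) (i : Fin d) :
    (L T x i).Finite := ((TX_finite hT x).image _).subset (L_sub_image x i)

lemma generic_bound {T : Set (Fin d → ℝ)} (hT : IsCubeTiling T)
    (hno : ∀ t ∈ T, ∀ s ∈ T, ¬ IsTwinPair t s) {x : Fin d → ℝ}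
    (hx : ∀ t ∈ T, ∀ j, t j ≠ x j) (i : Fin d) : 24 * (L T x i).ncard ≤ 2 ^ d := by
  refine le_trans ?_ (TX_card hT x)
  rw [Set.ncard_eq_toFinset_card _ (L_finite hT x i)]
  have h1 : ∀ r ∈ (L_finite hT x i).toFinset,
      24 ≤ ({t ∈ (TX_finite hT x).toFinset | (wd x t i).1 = r} : Finset _).card := by
    intro r hr
    rw [Set.Finite.mem_toFinset] at hr
    obtain ⟨t, ht, rfl, h, hle⟩ := hr
    refine fiber_card hT hno hx i (t0 := t) ?_ ?_
    · rw [Set.Finite.mem_toFinset]; exact ⟨ht, (meet_iff t x).1 h⟩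
    · unfold wd; rw [if_pos (lt_of_le_of_ne hle (hx t ht i))]
  have h2 := Finset.sum_le_sum h1
  rw [Finset.sum_const, smul_eq_mul, mul_comm] at h2
  refine h2.trans ?_
  rw [← Finset.card_biUnion]
  · apply Finset.card_le_card
    intro t ht
    rw [Finset.mem_biUnion] at ht
    obtain ⟨r, _, h⟩ := ht
    exact (Finset.mem_filter.1 h).1
  · intro a _ b _ hab
    rw [Function.onFun, Finset.disjoint_left]
    intro t h1 h2
    exact hab ((Finset.mem_filter.1 h1).2.symm.trans (Finset.mem_filter.1 h2).2)

lemma T_countable {T : Set (Fin d → ℝ)} (hT : IsCubeTiling T) : T.Countable := by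
  have : Set.InjOn (fun (t : Fin d → ℝ) (j : Fin d) => ⌈t j⌉) T := by
    intro t ht s hs h
    apply eq_of_meet hT ht hs
    refine ⟨fun j => (⌈t j⌉ : ℝ), fun j => ⟨Int.le_ceil _, Int.ceil_lt_add_one _⟩, fun j => ?_⟩
    have e : ⌈t j⌉ = ⌈s j⌉ := congrFun h j
    simp only [e]
    exact ⟨Int.le_ceil _, Int.ceil_lt_add_one _⟩
  exact Set.MapsTo.countable_of_injOn (Set.mapsTo_univ _ _) this Set.countable_univ

lemma bound {T : Set (Fin d → ℝ)} (hT : IsCubeTiling T)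
    (hno : ∀ t ∈ T, ∀ s ∈ T, ¬ IsTwinPair t s) (x : Fin d → ℝ) (i : Fin d) :
    24 * (L T x i).ncard ≤ 2 ^ d := by
  -- small distance
  obtain ⟨δ, hδ, hδt⟩ : ∃ δ : ℝ, 0 < δ ∧ ∀ t ∈ TX T x, ∀ j, δ ≤ t j - x j + 1 := by
    set S := insert (1 : ℝ) (((TX_finite hT x).toFinset ×ˢ (univ : Finset (Fin d))).image
      fun y => y.1 y.2 - x y.2 + 1) with hS
    have hne : S.Nonempty := ⟨1, by simp [hS]⟩
    refine ⟨S.min' hne, ?_, fun t ht j => S.min'_le _ ?_⟩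
    · suffices hall : ∀ m ∈ S, 0 < m from hall _ (S.min'_mem hne)
      intro m this
      rw [hS, Finset.mem_insert, Finset.mem_image] at this
      rcases this with h | ⟨⟨t, j⟩, h, e⟩
      · rw [h]; exact one_pos
      · rw [← e]
        rw [Finset.mem_product, Set.Finite.mem_toFinset] at h
        have := (h.1.2 j).1
        simp only
        linarith
    · rw [hS, Finset.mem_insert, Finset.mem_image]
      refine Or.inr ⟨(t, j), ?_, rfl⟩
      rw [Finset.mem_product, Set.Finite.mem_toFinset]
      exact ⟨ht, Finset.mem_univ _⟩
  have hcount : (⋃ j : Fin d, (fun t : Fin d → ℝ => t j - x j) '' T).Countable :=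
    Set.countable_iUnion fun j => (T_countable hT).image _
  obtain ⟨ε, hε, hεn⟩ := (hcount.dense_compl ℝ).exists_between hδ
  have hgen : ∀ t ∈ T, ∀ j, t j ≠ x j + ε := by
    intro t ht j h
    apply hε
    rw [Set.mem_iUnion]
    exact ⟨j, t, ht, by simp [h]⟩
  refine le_trans ?_ (generic_bound hT hno hgen i)
  apply Nat.mul_le_mul_left
  apply Set.ncard_le_ncard _ (L_finite hT _ i)
  rintro r ⟨t, ht, rfl, h, hle⟩
  refine ⟨t, ht, rfl, ?_, by linarith [hεn.1]⟩
  rw [meet_iff] at h ⊢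
  intro j
  have a := h j
  have b := hδt t ⟨ht, h⟩ j
  have := hεn.1
  have := hεn.2
  constructor <;> linarith

end Reduction

/-- If `[0,1)^d + T` is a cube tiling of `ℝ^d` and `r⁺(T) > 2^(d-3)/3`, then the
tiling contains a twin pair. -/
theorem twinPair_of_rplus_gt {d : ℕ} (T : Set (Fin d → ℝ))
    (hT : IsCubeTiling T) (h : (rplus T : ℝ) > 2 ^ ((d : ℤ) - 3) / 3) :
    ∃ t ∈ T, ∃ s ∈ T, IsTwinPair t s := by
  by_contra hcon
  push Not at hcon
  have hb : rplus T ≤ 2 ^ d / 24 := by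
    unfold rplus
    refine ciSup_le' fun x => ciSup_le' fun i => ?_
    rw [Nat.le_div_iff_mul_le (by norm_num), mul_comm]
    exact bound hT hcon x i
  rw [Nat.le_div_iff_mul_le (by norm_num)] at hb
  have hb' : (rplus T : ℝ) * 24 ≤ 2 ^ d := by exact_mod_cast hb
  rw [zpow_sub₀ (by norm_num), zpow_natCast] at h
  norm_num at h
  linarith
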